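/- arXiv:1610.04439 — 4 statements merged into one kernel-verified Lean document; each statement's English description precedes it below -/
import Mathlib

section
/- There exists an infinite word over a 3-letter alphabet that avoids the circular formula C_3 = ABCA.BCAB.CABC, i.e., there is no map h assigning to each of the variables A, B, C a nonempty finite word over the 3-letter alphabet such that all three of the words h(A)h(B)h(C)h(A), h(B)h(C)h(A)h(B), h(C)h(A)h(B)h(C) are factors of the infinite word. (This is the upper bound λ(C_3) ≤ 3.) -/
/-- `u` is a factor of the infinite word `x`: for some index `i`,
`u` equals the block `x i, x (i+1), …` of length `|u|`. -/
def IsFactorOfInf {α : Type*} (u : List α) (x : ℕ → α) : Prop :=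
  ∃ i : ℕ, u = (List.range u.length).map fun j => x (i + j)

/-!
The avoiding word is a three-letter recoding of the paperfolding sequence: the letter at
`2 ^ s * m`, `m` odd, depends on `m` modulo `4` and, when `m ≡ 1`, on whether `s = 0`. Its letter
`0` marks the positions congruent to `1` modulo `4`, and adding an odd multiple of `2 ^ (t + 1)` to
a position of 2-adic valuation `t` changes the letter. Consequently, two occurrences of a factor of
length at least `2 ^ r` that contains `0` start at positions congruent modulo `2 ^ r`.

Suppose the three fragments occur at `i`, `k`, `l`, and let `p = |ABC|`. Each of `A`, `B`, `C`
recurs at distance `p`, and one of them contains `0`, so `4 ∣ p`. Write `p = 2 ^ (t + 1) * q` with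
`q` odd. Since `BCA` and `CAB` occur in two fragments each, the blocks `A` at `i`, `B` at `k` and
`C` at `l` cover the same residues modulo `2 ^ (t + 1)` as the single occurrence of `ABC` at `i`.
As `2 ^ (t + 1) ≤ p`, one of these blocks covers a position of valuation `t`, but the letter there
would have to recur at distance `p`.
-/

section Occurrences

variable {α : Type*} {x : ℕ → α} {u v A B C : List α} {i k l : ℕ}

/-- An occurrence of the finite word `u` in the infinite word `x` at position `i`, so that
`IsFactorOfInf u x` unfolds to `∃ i, OccursAt u x i`. -/
def OccursAt (u : List α) (x : ℕ → α) (i : ℕ) : Prop :=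
  u = (List.range u.length).map fun j => x (i + j)

lemma occursAt_append :
    OccursAt (u ++ v) x i ↔ OccursAt u x i ∧ OccursAt v x (i + u.length) := by
  simp only [OccursAt, List.length_append, List.range_add, List.map_append, List.map_map,
    Function.comp_def, ← add_assoc]
  exact ⟨fun h => List.append_inj h (by simp), fun ⟨hu, hv⟩ => congrArg₂ (· ++ ·) hu hv⟩

namespace OccursAt

lemma getElem_eq (h : OccursAt u x i) {j : ℕ} (hj : j < u.length) : u[j] = x (i + j) := by
  rw [List.getElem_of_eq h hj]
  simp only [List.getElem_map, List.getElem_range]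

lemma apply_eq_apply (hi : OccursAt u x i) (hk : OccursAt u x k) {j : ℕ} (hj : j < u.length) :
    x (i + j) = x (k + j) :=
  (hi.getElem_eq hj).symm.trans (hk.getElem_eq hj)

end OccursAt

/-- An occurrence of the circular formula `ABCA.BCAB.CABC` in `x`, the three fragments occurring at
the positions `i`, `k` and `l`. The values of the variables may be empty here. -/
structure CircularOccurrence (A B C : List α) (x : ℕ → α) (i k l : ℕ) : Prop where
  fragment_ABCA : OccursAt (A ++ B ++ C ++ A) x i
  fragment_BCAB : OccursAt (B ++ C ++ A ++ B) x k
  fragment_CABC : OccursAt (C ++ A ++ B ++ C) x l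

namespace CircularOccurrence

lemma rotate (h : CircularOccurrence A B C x i k l) : CircularOccurrence B C A x k l i :=
  ⟨h.fragment_BCAB, h.fragment_CABC, h.fragment_ABCA⟩

lemma occursAt_left (h : CircularOccurrence A B C x i k l) : OccursAt A x i := by
  have hA := h.fragment_ABCA
  simp only [List.append_assoc] at hA
  exact (occursAt_append.1 hA).1

lemma occursAt_right (h : CircularOccurrence A B C x i k l) :
    OccursAt A x (i + (A.length + B.length + C.length)) := by
  simpa only [List.length_append] using (occursAt_append.1 h.fragment_ABCA).2

lemma occursAt_conjugate (h : CircularOccurrence A B C x i k l) :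
    OccursAt (B ++ C ++ A) x (i + A.length) ∧ OccursAt (B ++ C ++ A) x k := by
  have hA := h.fragment_ABCA
  rw [List.append_assoc, List.append_assoc, ← List.append_assoc B] at hA
  exact ⟨(occursAt_append.1 hA).2, (occursAt_append.1 h.fragment_BCAB).1⟩

end CircularOccurrence

end Occurrences

/-- The ternary paperfolding word: with `m` the odd part of `n`, the letter at `n` is `2` if
`m ≡ 3` modulo `4`, and otherwise records the parity of `n`. The odd part of `0` is `0`, which makes
`1` the letter at position `0`. -/
def paperfoldingWord (n : ℕ) : Fin 3 :=
  if ordCompl[2] n % 4 = 3 then 2 else if Odd n then 0 else 1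

lemma exists_lt_add_modEq {n : ℕ} (hn : 0 < n) (i r : ℕ) : ∃ j < n, i + j ≡ r [MOD n] := by
  have : NeZero n := ⟨hn.ne'⟩
  refine ⟨((r : ZMod n) - i).val, ZMod.val_lt _, (ZMod.natCast_eq_natCast_iff _ _ _).1 ?_⟩
  rw [Nat.cast_add, ZMod.natCast_zmod_val, add_sub_cancel]

lemma exists_eq_two_pow_mul_odd_of_modEq {n t : ℕ} (hn : n ≡ 2 ^ t [MOD 2 ^ (t + 1)]) :
    ∃ m, Odd m ∧ n = 2 ^ t * m := by
  refine ⟨2 * (n / 2 ^ (t + 1)) + 1, odd_two_mul_add_one _, ?_⟩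
  have hmod : n % 2 ^ (t + 1) = 2 ^ t :=
    Eq.trans hn (Nat.mod_eq_of_lt (Nat.pow_lt_pow_succ one_lt_two))
  calc n = 2 ^ (t + 1) * (n / 2 ^ (t + 1)) + 2 ^ t := by rw [← hmod, Nat.div_add_mod]
    _ = 2 ^ t * (2 * (n / 2 ^ (t + 1)) + 1) := by ring

section Paperfolding

variable {u A B C : List (Fin 3)} {i k l t q : ℕ}

lemma paperfoldingWord_two_pow_mul (s : ℕ) {m : ℕ} (hm : Odd m) :
    paperfoldingWord (2 ^ s * m) = if m % 4 = 3 then 2 else if s = 0 then 0 else 1 := by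
  have hodd : Odd (2 ^ s * m) ↔ s = 0 := by
    simp [← Nat.not_even_iff_odd, Nat.even_mul, Nat.even_pow, Nat.not_even_iff_odd.2 hm]
  simp only [paperfoldingWord, hodd,
    Nat.ordCompl_pow_mul_of_not_dvd s Nat.prime_two hm.not_two_dvd_nat]

lemma paperfoldingWord_eq_zero_iff {n : ℕ} : paperfoldingWord n = 0 ↔ n ≡ 1 [MOD 4] := by
  rcases n.even_or_odd with hn | hn
  · have hne : ¬ n ≡ 1 [MOD 4] := by grind [Nat.ModEq]
    simp [paperfoldingWord, hne, Nat.not_odd_iff_even.2 hn, ite_eq_iff]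
  · have hvalue := paperfoldingWord_two_pow_mul 0 hn
    rw [pow_zero, one_mul] at hvalue
    grind [Nat.ModEq]

lemma paperfoldingWord_ne_add {n : ℕ} (hn : n ≡ 2 ^ t [MOD 2 ^ (t + 1)]) (hq : Odd q) :
    paperfoldingWord n ≠ paperfoldingWord (n + 2 ^ (t + 1) * q) := by
  obtain ⟨m, hm, rfl⟩ := exists_eq_two_pow_mul_odd_of_modEq hn
  have hadd : 2 ^ t * m + 2 ^ (t + 1) * q = 2 ^ t * (m + 2 * q) := by ring
  rw [hadd, paperfoldingWord_two_pow_mul t hm,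
    paperfoldingWord_two_pow_mul t (hm.add_even (even_two_mul q))]
  have hflip : (m + 2 * q) % 4 = 3 ↔ ¬ m % 4 = 3 := by grind
  grind

lemma zero_mem_of_occursAt_paperfoldingWord (h : OccursAt u paperfoldingWord i)
    (hu : 4 ≤ u.length) : 0 ∈ u := by
  obtain ⟨j, hj, hmod⟩ := exists_lt_add_modEq four_pos i 1
  rw [← paperfoldingWord_eq_zero_iff.2 hmod, ← h.getElem_eq (hj.trans_le hu)]
  exact List.getElem_mem _

lemma modEq_four_of_occursAt_of_zero_mem (hi : OccursAt u paperfoldingWord i)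
    (hk : OccursAt u paperfoldingWord k) (h0 : 0 ∈ u) : i ≡ k [MOD 4] := by
  obtain ⟨j, hj, hzero⟩ := List.getElem_of_mem h0
  have hi' := paperfoldingWord_eq_zero_iff.1 ((hi.getElem_eq hj).symm.trans hzero)
  have hk' := paperfoldingWord_eq_zero_iff.1 ((hk.getElem_eq hj).symm.trans hzero)
  exact (hi'.trans hk'.symm).add_right_cancel' j

lemma not_modEq_of_occursAt_add (hi : OccursAt u paperfoldingWord i)
    (hk : OccursAt u paperfoldingWord (i + 2 ^ (t + 1) * q)) (hq : Odd q) {j : ℕ}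
    (hj : j < u.length) : ¬ i + j ≡ 2 ^ t [MOD 2 ^ (t + 1)] := by
  intro hmod
  apply paperfoldingWord_ne_add hmod hq
  rw [hi.apply_eq_apply hk hj, add_right_comm]

lemma two_pow_dvd_of_occursAt_add {r d : ℕ} (hi : OccursAt u paperfoldingWord i)
    (hd : OccursAt u paperfoldingWord (i + d)) (h0 : 0 ∈ u) (hr : 2 ^ r ≤ u.length) :
    2 ^ r ∣ d := by
  rcases eq_or_ne d 0 with rfl | hd0
  · exact dvd_zero _
  have h4 : 4 ∣ d := Nat.left_modEq_add_iff.1 (modEq_four_of_occursAt_of_zero_mem hi hd h0)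
  obtain ⟨s, q, hq, rfl⟩ := Nat.exists_eq_two_pow_mul_odd hd0
  obtain _ | t := s
  · grind
  refine (pow_dvd_pow 2 ?_).mul_right q
  by_contra! hlt
  obtain ⟨j, hj, hmod⟩ := exists_lt_add_modEq (Nat.two_pow_pos (t + 1)) i (2 ^ t)
  have hjr : j < 2 ^ r := hj.trans (Nat.pow_lt_pow_right one_lt_two hlt)
  exact not_modEq_of_occursAt_add hi hd hq (hjr.trans_le hr) hmod

lemma modEq_two_pow_of_occursAt {r : ℕ} (hi : OccursAt u paperfoldingWord i)
    (hk : OccursAt u paperfoldingWord k) (h0 : 0 ∈ u) (hr : 2 ^ r ≤ u.length) :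
    i ≡ k [MOD 2 ^ r] := by
  wlog hik : i ≤ k generalizing i k
  · exact (this hk hi (le_of_not_ge hik)).symm
  obtain ⟨d, rfl⟩ := Nat.exists_eq_add_of_le hik
  exact Nat.left_modEq_add_iff.2 (two_pow_dvd_of_occursAt_add hi hk h0 hr)

namespace CircularOccurrence

lemma four_dvd_of_zero_mem (h : CircularOccurrence A B C paperfoldingWord i k l) (h0 : 0 ∈ A) :
    4 ∣ A.length + B.length + C.length :=
  Nat.left_modEq_add_iff.1
    (modEq_four_of_occursAt_of_zero_mem h.occursAt_left h.occursAt_right h0)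

lemma four_dvd (h : CircularOccurrence A B C paperfoldingWord i k l)
    (hlen : 4 ≤ (A ++ B ++ C ++ A).length) : 4 ∣ A.length + B.length + C.length := by
  have h0 := zero_mem_of_occursAt_paperfoldingWord h.fragment_ABCA hlen
  simp only [List.mem_append] at h0
  rcases h0 with ((hA | hB) | hC) | hA
  · exact h.four_dvd_of_zero_mem hA
  · have := h.rotate.four_dvd_of_zero_mem hB
    omega
  · have := h.rotate.rotate.four_dvd_of_zero_mem hC
    omega
  · exact h.four_dvd_of_zero_mem hA

lemma modEq_two_pow {r : ℕ} (h : CircularOccurrence A B C paperfoldingWord i k l)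
    (h4 : 4 ≤ A.length + B.length + C.length) (hr : 2 ^ r ≤ A.length + B.length + C.length) :
    i + A.length ≡ k [MOD 2 ^ r] := by
  obtain ⟨hi, hk⟩ := h.occursAt_conjugate
  have hlen : (B ++ C ++ A).length = A.length + B.length + C.length := by
    simp only [List.length_append]
    omega
  exact modEq_two_pow_of_occursAt hi hk
    (zero_mem_of_occursAt_paperfoldingWord hk (hlen ▸ h4)) (hlen ▸ hr)

lemma not_modEq (h : CircularOccurrence A B C paperfoldingWord i k l) (hq : Odd q)
    (hp : A.length + B.length + C.length = 2 ^ (t + 1) * q) {j : ℕ} (hj : j < A.length) :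
    ¬ i + j ≡ 2 ^ t [MOD 2 ^ (t + 1)] :=
  not_modEq_of_occursAt_add h.occursAt_left (hp ▸ h.occursAt_right) hq hj

lemma length_ne_two_pow_mul_odd (h : CircularOccurrence A B C paperfoldingWord i k l)
    (h4 : 4 ≤ A.length + B.length + C.length) (hq : Odd q) :
    A.length + B.length + C.length ≠ 2 ^ (t + 1) * q := by
  intro hp
  have hr : 2 ^ (t + 1) ≤ A.length + B.length + C.length :=
    hp ▸ Nat.le_mul_of_pos_right _ hq.pos
  have hik := h.modEq_two_pow h4 hr
  have hkl := h.rotate.modEq_two_pow (by omega) (hr.trans_eq (by omega))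
  obtain ⟨j, hj, hmod⟩ := exists_lt_add_modEq (Nat.two_pow_pos (t + 1)) i (2 ^ t)
  rcases lt_or_ge j A.length with hjA | hjA
  · exact h.not_modEq hq hp hjA hmod
  obtain ⟨e, rfl⟩ := Nat.exists_eq_add_of_le hjA
  rw [← add_assoc] at hmod
  replace hmod := (hik.add_right e).symm.trans hmod
  rcases lt_or_ge e B.length with heB | heB
  · exact h.rotate.not_modEq hq (by omega) heB hmod
  obtain ⟨f, rfl⟩ := Nat.exists_eq_add_of_le heB
  rw [← add_assoc] at hmod
  exact h.rotate.rotate.not_modEq hq (by omega) (by omega)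
    ((hkl.add_right f).symm.trans hmod)

end CircularOccurrence

end Paperfolding

/-- There exists an infinite word over a 3-letter alphabet avoiding the
circular formula `C₃ = ABCA.BCAB.CABC`: no assignment of nonempty words to
the variables `A, B, C` makes all three fragment images factors. -/
theorem stmt_0 :
    ∃ x : ℕ → Fin 3,
      ¬ ∃ hA hB hC : List (Fin 3),
          hA ≠ [] ∧ hB ≠ [] ∧ hC ≠ [] ∧
          IsFactorOfInf (hA ++ hB ++ hC ++ hA) x ∧
          IsFactorOfInf (hB ++ hC ++ hA ++ hB) x ∧
          IsFactorOfInf (hC ++ hA ++ hB ++ hC) x := by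
  refine ⟨paperfoldingWord, ?_⟩
  rintro ⟨A, B, C, hA, hB, hC, ⟨i, hi⟩, ⟨k, hk⟩, ⟨l, hl⟩⟩
  have h : CircularOccurrence A B C paperfoldingWord i k l := ⟨hi, hk, hl⟩
  have hA_pos := List.length_pos_iff.2 hA
  have hB_pos := List.length_pos_iff.2 hB
  have hC_pos := List.length_pos_iff.2 hC
  have h4 : 4 ∣ A.length + B.length + C.length :=
    h.four_dvd (by simp only [List.length_append]; omega)
  have hp : A.length + B.length + C.length ≠ 0 := by omega
  obtain ⟨_ | t, q, hq, hpq⟩ := Nat.exists_eq_two_pow_mul_odd hp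
  · grind
  · exact h.length_ne_two_pow_mul_odd (Nat.le_of_dvd (Nat.pos_of_ne_zero hp) h4) hq hpq
end

section
/- There exists an infinite word over a 2-letter alphabet that simultaneously avoids every circular formula C_i with i ≥ 4. (Hence λ(C_i) = 2 for every i ≥ 4, since a one-letter alphabet avoids no avoidable formula.) -/
/-- The `i`-th fragment `A_i A_{i+1} … A_{i+t}` of the circular formula `C_t`,
as the list of variable indices (taken modulo `t`), of length `t + 1`. -/
def circFragment (t i : ℕ) : List ℕ :=
  (List.range (t + 1)).map fun j => (i + j) % t

/-- `h` is an occurrence of the circular formula `C_t` in the infinite word `x`: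
`h` assigns a nonempty word to each of the `t` variables, and the `h`-image of
every fragment of `C_t` is a factor of `x`. -/
def CircOcc {α : Type*} (t : ℕ) (h : ℕ → List α) (x : ℕ → α) : Prop :=
  (∀ v < t, h v ≠ []) ∧ ∀ i < t, IsFactorOfInf ((circFragment t i).flatMap h) x

/-!
Write `w = h A₀ ⋯ h Aₜ₋₁` for an occurrence `h` of `Cₜ` in `x`, and `n = |w| ≥ t`. A position of the
circular word `w` lies in some `h Aᵢ`, and the image of `Aᵢ Aᵢ₊₁ ⋯ Aᵢ₊ₜ` is long enough to contain
the conjugate of `w` starting there followed by its first letter. So `x` has a *circuit* of length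
`n`, and it suffices to find a binary word without circuits of length at least `4`.

Circuits can be desubstituted. If the factors of length `l ≤ n` of the image of `y` under a
`q`-uniform morphism reveal the block boundaries, then boundaries propagate around a circuit of
length `n`, so `q ∣ n` and the circular word is the image of one of length `n / q`. The extra letter
makes the latter a circuit of `y`: cut both ends of the window inside a block, at a position chosen
so that the remaining part of each of the two cut blocks still determines its letter. Descending
along the fixed point of a 3-uniform morphism on four letters ends at a circuit of length less than
`5`, and passing to its image under a 5-uniform binary morphism leaves only the lengths `4` and `5`;
the finitely many short factors exclude all of these.
-/

namespace InfiniteWord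

variable {α β : Type*}

section Windows

/-- The factor of length `l` at position `i` of the infinite word `x`. -/
def window (x : ℕ → α) (i l : ℕ) : List α :=
  (List.range l).map fun j => x (i + j)

variable {x y : ℕ → α} {i j l : ℕ}

@[simp]
lemma length_window : (window x i l).length = l := by simp [window]

lemma window_eq_window_iff : window x i l = window y j l ↔ ∀ k < l, x (i + k) = y (j + k) := by
  simp [window]

lemma window_add (x : ℕ → α) (i k l : ℕ) :
    window x i (k + l) = window x i k ++ window x (i + k) l := by
  simp [window, List.range_add, Function.comp_def, add_assoc]

lemma take_window_add (x : ℕ → α) (i k l : ℕ) : (window x i (k + l)).take k = window x i k := by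
  rw [window_add, List.take_left' length_window]

lemma drop_window_add (x : ℕ → α) (i k l : ℕ) :
    (window x i (k + l)).drop k = window x (i + k) l := by
  rw [window_add, List.drop_left' length_window]

lemma take_drop_window {r l k : ℕ} (h : r + l ≤ k) (x : ℕ → α) (i : ℕ) :
    ((window x i k).drop r).take l = window x (i + r) l := by
  obtain ⟨e, rfl⟩ := Nat.exists_eq_add_of_le h
  rw [add_assoc, drop_window_add, take_window_add]

lemma isFactorOfInf_window_iff {c : ℕ → α} {p : ℕ} :
    IsFactorOfInf (window c p l) x ↔ ∃ i, window x i l = window c p l := by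
  simp [IsFactorOfInf, window, eq_comm]

lemma isFactorOfInf_of_infix {u v : List α} (huv : u <:+: v) (hv : IsFactorOfInf v x) :
    IsFactorOfInf u x := by
  obtain ⟨s, t, rfl⟩ := huv
  obtain ⟨i, hi⟩ := hv
  refine ⟨i + s.length, ?_⟩
  calc u = ((s ++ u ++ t).drop s.length).take u.length := by simp
    _ = ((window x i (s ++ u ++ t).length).drop s.length).take u.length := by
      rw [← window] at hi; rw [← hi]
    _ = window x (i + s.length) u.length := take_drop_window (by simp) x i

lemma window_isInfix_window {p q k : ℕ} (hp : q ≤ p) (hl : p + l ≤ q + k) :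
    window x p l <:+: window x q k := by
  obtain ⟨r, rfl⟩ := Nat.exists_eq_add_of_le hp
  rw [← take_drop_window (by omega : r + l ≤ k)]
  exact (List.take_prefix _ _).isInfix.trans (List.drop_suffix _ _).isInfix

lemma window_mod_of_periodic {n : ℕ} (hx : x.Periodic n) (p l : ℕ) :
    window x (p % n) l = window x p l := by
  refine window_eq_window_iff.2 fun k _ => ?_
  rw [← hx.map_mod_nat (p % n + k), Nat.mod_add_mod, hx.map_mod_nat]

end Windows

/-- `x` has a circuit of length `n` if there is a circular word of length `n`, each of whose
conjugates, prolonged by its own first letter, is a factor of `x`. The circular word is encoded as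
the `n`-periodic infinite word `c`. -/
def HasCircuit (x : ℕ → α) (n : ℕ) : Prop :=
  ∃ c : ℕ → α, c.Periodic n ∧ ∀ p, IsFactorOfInf (window c p (n + 1)) x

section Occurrences

lemma exists_periodic_window_eq {w : List α} (hw : w ≠ []) :
    ∃ c : ℕ → α, c.Periodic w.length ∧ window c 0 w.length = w := by
  have hpos : 0 < w.length := List.length_pos_iff.2 hw
  refine ⟨fun p => w[p % w.length]'(Nat.mod_lt p hpos), fun p => by simp, ?_⟩
  refine List.ext_getElem (by simp) fun k _ hk => ?_
  simp [window, Nat.mod_eq_of_lt hk]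

-- The word `v ++ w ++ u ++ v` occurs in the square of `u ++ v ++ w`.
lemma window_conjugate_append {c : ℕ → α} {u v w : List α}
    (hc : c.Periodic (u ++ v ++ w).length)
    (hw : window c 0 (u ++ v ++ w).length = u ++ v ++ w) :
    window c u.length ((u ++ v ++ w).length + v.length) = v ++ w ++ u ++ v := by
  have hsquare : window c 0 ((u ++ v ++ w).length + (u ++ v ++ w).length) =
      u ++ v ++ w ++ (u ++ v ++ w) := by
    rw [window_add, ← window_mod_of_periodic hc (0 + _)]
    simp only [zero_add, Nat.mod_self, hw]
  have hle : u.length + ((u ++ v ++ w).length + v.length) ≤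
      (u ++ v ++ w).length + (u ++ v ++ w).length := by
    simp only [List.length_append]
    omega
  rw [← zero_add u.length, ← take_drop_window hle, hsquare]
  have hassoc : u ++ v ++ w ++ (u ++ v ++ w) = u ++ ((v ++ w ++ u ++ v) ++ w) := by simp
  rw [hassoc, List.drop_left, List.take_left']
  simp only [List.length_append]
  omega

lemma exists_append_cons_of_lt_length_flatMap {ι : Type*} (h : ι → List α) :
    ∀ (l : List ι) {p : ℕ}, p < (l.flatMap h).length →
      ∃ l₁ a l₂, l = l₁ ++ a :: l₂ ∧ (l₁.flatMap h).length ≤ p ∧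
        p < (l₁.flatMap h).length + (h a).length
  | [], p, hp => by simp at hp
  | b :: l, p, hp => by
    rw [List.flatMap_cons, List.length_append] at hp
    rcases lt_or_ge p (h b).length with hpb | hpb
    · exact ⟨[], b, l, by simp [hpb]⟩
    · obtain ⟨l₁, a, l₂, rfl, hle, hlt⟩ :=
        exists_append_cons_of_lt_length_flatMap h l (p := p - (h b).length) (by omega)
      refine ⟨b :: l₁, a, l₂, rfl, ?_, ?_⟩ <;>
        rw [List.flatMap_cons, List.length_append] <;> omega

lemma circFragment_eq_rotate {t i : ℕ} (hi : i < t) :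
    circFragment t i = (List.range t).rotate i ++ [i] := by
  rw [circFragment, List.range_succ, List.map_append, List.map_singleton, Nat.add_mod_right,
    Nat.mod_eq_of_lt hi]
  congr 1
  exact List.ext_getElem (by simp) fun k _ _ => by simp [List.getElem_rotate, add_comm]

lemma circFragment_of_range_eq {t a : ℕ} {l₁ l₂ : List ℕ} (h : List.range t = l₁ ++ a :: l₂) :
    circFragment t a = a :: l₂ ++ l₁ ++ [a] := by
  have hat : a < t := List.mem_range.1 (by simp [h])
  have ha : a = l₁.length := by
    have hentry := congrArg (·[l₁.length]?) h
    grind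
  subst ha
  rw [circFragment_eq_rotate hat, h, List.rotate_append_length_eq]

lemma le_length_flatMap {ι : Type*} {h : ι → List α} {l : List ι} (hne : ∀ a ∈ l, h a ≠ []) :
    l.length ≤ (l.flatMap h).length := by
  rw [List.length_flatMap, ← List.length_map (as := l) fun a => (h a).length]
  refine List.length_le_sum_of_one_le _ fun k hk => ?_
  obtain ⟨a, ha, rfl⟩ := List.mem_map.1 hk
  exact List.length_pos_iff.2 (hne a ha)

theorem exists_hasCircuit_of_circOcc {t : ℕ} {h : ℕ → List α} {x : ℕ → α} (ht : 0 < t)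
    (hocc : CircOcc t h x) : ∃ n, t ≤ n ∧ HasCircuit x n := by
  obtain ⟨hne, hfrag⟩ := hocc
  set w := (List.range t).flatMap h with hw
  have htw : t ≤ w.length := by
    rw [← List.length_range (n := t)]
    exact le_length_flatMap fun a ha => hne a (List.mem_range.1 ha)
  have hpos : 0 < w.length := ht.trans_le htw
  obtain ⟨c, hper, hcw⟩ := exists_periodic_window_eq (List.length_pos_iff.1 hpos)
  refine ⟨w.length, htw, c, hper, fun p => ?_⟩
  rw [← window_mod_of_periodic hper]
  obtain ⟨l₁, a, l₂, hrange, hle, hlt⟩ :=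
    exists_append_cons_of_lt_length_flatMap h (List.range t) (Nat.mod_lt p hpos)
  rw [← hw] at hle hlt
  have hsplit : w = l₁.flatMap h ++ h a ++ l₂.flatMap h := by simp [hw, hrange]
  have hwindow : window c (l₁.flatMap h).length (w.length + (h a).length) =
      (circFragment t a).flatMap h := by
    rw [hsplit] at hper hcw ⊢
    rw [window_conjugate_append hper hcw, circFragment_of_range_eq hrange]
    simp
  refine isFactorOfInf_of_infix ?_ (hfrag a (List.mem_range.1 (by simp [hrange])))
  rw [← hwindow]
  exact window_isInfix_window hle (by omega)

end Occurrences

section UniformMorphisms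

variable {q : ℕ} [NeZero q] {f : β → Fin q → α} {y : ℕ → β}

/-- The image of the infinite word `y` under the `q`-uniform morphism that sends each letter `b` to
the word `f b 0, …, f b (q - 1)`. -/
def uniformImage (f : β → Fin q → α) (y : ℕ → β) (n : ℕ) : α :=
  f (y (n / q)) (Fin.ofNat q n)

lemma uniformImage_mul_add (f : β → Fin q → α) (y : ℕ → β) (b : ℕ) (r : Fin q) :
    uniformImage f y (q * b + r) = f (y b) r := by
  have hdiv : (q * b + r) / q = b := by
    rw [Nat.mul_add_div (Nat.pos_of_neZero q), Nat.div_eq_of_lt r.isLt, add_zero]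
  have hmod : Fin.ofNat q (q * b + r) = r :=
    Fin.ext ((Nat.mul_add_mod q b r).trans (Nat.mod_eq_of_lt r.isLt))
  rw [uniformImage, hdiv, hmod]

lemma periodic_of_periodic_uniformImage {m : ℕ} (hf : f.Injective)
    (h : (uniformImage f y).Periodic (q * m)) : y.Periodic m := by
  refine fun p => hf (funext fun r => ?_)
  rw [← uniformImage_mul_add f, ← uniformImage_mul_add f, ← h (q * p + r), mul_add,
    add_right_comm]

-- A window of length `q * m + 1` starting at position `u` of a block consists of the rest of that
-- block, `m - 1` full blocks, and the first `u + 1` letters of the last block.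
lemma window_eq_of_window_uniformImage_eq {d : ℕ → β} {u : Fin q} {b p m : ℕ} (hm : 0 < m)
    (hsuf : ∀ a b, (∀ r, u ≤ r → f a r = f b r) → a = b)
    (hpre : ∀ a b, (∀ r, r ≤ u → f a r = f b r) → a = b)
    (h : window (uniformImage f y) (q * b + u) (q * m + 1) =
      window (uniformImage f d) (q * p + u) (q * m + 1)) :
    window y b (m + 1) = window d p (m + 1) := by
  rw [window_eq_window_iff] at h ⊢
  have hletter : ∀ j (r : Fin q), (u : ℕ) ≤ q * j + r → q * j + r ≤ q * m + u →
      f (y (b + j)) r = f (d (p + j)) r := by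
    intro j r hlow hhigh
    rw [← uniformImage_mul_add f, ← uniformImage_mul_add f]
    convert h (q * j + r - u) (by omega) using 2 <;> rw [mul_add] <;> omega
  intro j hj
  rcases Nat.eq_zero_or_pos j with rfl | hpos
  · exact hsuf _ _ fun r hr => hletter 0 r (by simpa using hr) (by nlinarith [r.isLt])
  · have hlow : q ≤ q * j := Nat.le_mul_of_pos_right q hpos
    have hhigh : q * j ≤ q * m := Nat.mul_le_mul_left q (Nat.lt_succ_iff.1 hj)
    exact hpre _ _ fun r hr => hletter j r (by omega) (by omega)

end UniformMorphisms

section Desubstitution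

/-- Every factor of length `l` of `x` determines the residue modulo `q` of the positions at which it
occurs. -/
def IsSynchronizing (x : ℕ → α) (q l : ℕ) : Prop :=
  ∀ i j, window x i l = window x j l → i ≡ j [MOD q]

variable {x c : ℕ → α} {q n : ℕ} {I : ℕ → ℕ}

lemma IsSynchronizing.mono {l : ℕ} (h : IsSynchronizing x q l) (hln : l ≤ n) :
    IsSynchronizing x q n := fun i j hij =>
  h i j <| window_eq_window_iff.2 fun k hk => window_eq_window_iff.1 hij k (hk.trans_le hln)

lemma IsSynchronizing.modEq_add (hsync : IsSynchronizing x q n)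
    (hI : ∀ p, window x (I p) (n + 1) = window c p (n + 1)) (p : ℕ) : I p ≡ I 0 + p [MOD q] := by
  simp only [window_eq_window_iff] at hI
  induction p with
  | zero => rfl
  | succ p ih =>
    refine .trans (hsync _ (I p + 1) (window_eq_window_iff.2 fun k hk => ?_)) (ih.add_right 1)
    rw [hI (p + 1) k (by omega), add_assoc, add_assoc, hI p (1 + k) (by omega)]

lemma IsSynchronizing.dvd_of_periodic (hsync : IsSynchronizing x q n) (hc : c.Periodic n)
    (hI : ∀ p, window x (I p) (n + 1) = window c p (n + 1)) : q ∣ n := by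
  have hreturn : I n ≡ I 0 [MOD q] := by
    refine hsync.mono n.le_succ _ _ ?_
    rw [hI, hI, ← window_mod_of_periodic hc n, Nat.mod_self]
  exact Nat.modEq_zero_iff_dvd.1
    (Nat.ModEq.add_left_cancel' (I 0) ((hsync.modEq_add hI n).symm.trans hreturn))

lemma HasCircuit.exists_aligned [NeZero q] (hx : HasCircuit x n) (hsync : IsSynchronizing x q n) :
    ∃ (c : ℕ → α) (I : ℕ → ℕ), c.Periodic n ∧
      (∀ p, window x (I p) (n + 1) = window c p (n + 1)) ∧ ∀ p, I p ≡ p [MOD q] := by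
  obtain ⟨c, hper, hfactor⟩ := hx
  choose I hI using fun p => isFactorOfInf_window_iff.1 (hfactor p)
  obtain ⟨s, hs⟩ := Nat.exists_eq_add_of_le (Nat.le_mul_of_pos_left (I 0) (Nat.pos_of_neZero q))
  -- Moving the origin of the circular word by `s` puts its position `0` at a block boundary.
  refine ⟨fun p => c (s + p), fun p => I (s + p),
    fun p => by simp only [← add_assoc, hper _], fun p => ?_, fun p => ?_⟩
  · rw [hI]
    simp only [window, add_assoc]
  · have hphase := hsync.modEq_add hI (s + p)
    rwa [← add_assoc, ← hs, Nat.ModEq, Nat.mul_add_mod] at hphase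

lemma exists_eq_uniformImage [NeZero q] {f : β → Fin q → α} {y : ℕ → β} (hqn : q ≤ n)
    (hI : ∀ p, window (uniformImage f y) (I p) n = window c p n)
    (hphase : ∀ p, I p ≡ p [MOD q]) : ∃ d, c = uniformImage f d := by
  refine ⟨fun j => y (I (q * j) / q), funext fun k => ?_⟩
  have hdvd : q ∣ I (q * (k / q)) :=
    Nat.modEq_zero_iff_dvd.1 ((hphase _).trans (Nat.modEq_zero_iff_dvd.2 (dvd_mul_right _ _)))
  have hlt : k % q < q := Nat.mod_lt k (Nat.pos_of_neZero q)
  have hletter := window_eq_window_iff.1 (hI (q * (k / q))) (k % q) (hlt.trans_le hqn)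
  rw [Nat.div_add_mod, ← Nat.mul_div_cancel' hdvd] at hletter
  rw [← hletter]
  exact uniformImage_mul_add f y _ (Fin.ofNat q k)

theorem HasCircuit.desubstitute [NeZero q] {f : β → Fin q → α} {y : ℕ → β} {u : Fin q}
    (hsuf : ∀ a b, (∀ r, u ≤ r → f a r = f b r) → a = b)
    (hpre : ∀ a b, (∀ r, r ≤ u → f a r = f b r) → a = b)
    (hsync : IsSynchronizing (uniformImage f y) q n) (hn : 0 < n)
    (hx : HasCircuit (uniformImage f y) n) : ∃ m, n = q * m ∧ HasCircuit y m := by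
  obtain ⟨c, I, hper, hI, hphase⟩ := hx.exists_aligned hsync
  obtain ⟨m, rfl⟩ := hsync.dvd_of_periodic hper hI
  have hm : 0 < m := Nat.pos_of_mul_pos_left hn
  have hqm : q ≤ q * m + 1 := (Nat.le_mul_of_pos_right q hm).trans (Nat.le_succ _)
  obtain ⟨d, rfl⟩ := exists_eq_uniformImage hqm hI hphase
  have hinj : f.Injective := fun a b hab => hpre a b fun r _ => congrFun hab r
  refine ⟨m, rfl, d, periodic_of_periodic_uniformImage hinj hper, fun p => ?_⟩
  refine isFactorOfInf_window_iff.2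
    ⟨I (q * p + u) / q, window_eq_of_window_uniformImage_eq hm hsuf hpre ?_⟩
  have hmod : I (q * p + u) % q = u := by
    rw [hphase, Nat.mul_add_mod, Nat.mod_eq_of_lt u.isLt]
  rw [← hI]
  nth_rewrite 2 [← hmod]
  rw [Nat.div_add_mod]

end Desubstitution

section FactorSets

variable {q : ℕ} {f : β → Fin q → α} {y : ℕ → β} {k l : ℕ}

/-- The factor of length `l` at position `r` of the image of the finite word `v` under the
`q`-uniform morphism `f`. -/
def imageFactor (f : β → Fin q → α) (l : ℕ) (v : List β) (r : Fin q) : List α :=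
  ((v.flatMap fun b => List.ofFn (f b)).drop r).take l

/-- The factors of length `l` of the images under `f` of the words in `S` that start inside the
image of the first letter. -/
def imageFactors [DecidableEq α] (f : β → Fin q → α) (l : ℕ) (S : Finset (List β)) :
    Finset (List α) :=
  S.biUnion fun v => Finset.univ.image (imageFactor f l v)

variable [NeZero q]

lemma window_uniformImage (f : β → Fin q → α) (y : ℕ → β) (b k : ℕ) :
    window (uniformImage f y) (q * b) (q * k) =
      (window y b k).flatMap fun a => List.ofFn (f a) := by
  induction k with
  | zero => rfl
  | succ k ih =>
    have hblock : window (uniformImage f y) (q * (b + k)) q = List.ofFn (f (y (b + k))) :=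
      List.ext_getElem (by simp) fun r _ hr => by
        simpa [window] using uniformImage_mul_add f y (b + k) ⟨r, by simpa using hr⟩
    rw [mul_add_one, window_add, window_add, ih, ← mul_add, hblock, List.flatMap_append]
    simp [window]

lemma window_uniformImage_eq_imageFactor (h : q + l ≤ q * k + 1) (i : ℕ) :
    window (uniformImage f y) i l = imageFactor f l (window y (i / q) k) (Fin.ofNat q i) := by
  have hlt : i % q < q := Nat.mod_lt i (Nat.pos_of_neZero q)
  rw [imageFactor, ← window_uniformImage, Fin.val_ofNat, take_drop_window (by omega),
    Nat.div_add_mod]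

lemma window_uniformImage_mem [DecidableEq α] {S : Finset (List β)} (h : q + l ≤ q * k + 1)
    {i : ℕ} (hi : window y (i / q) k ∈ S) :
    window (uniformImage f y) i l ∈ imageFactors f l S := by
  rw [window_uniformImage_eq_imageFactor h]
  exact Finset.mem_biUnion.2 ⟨_, hi, Finset.mem_image_of_mem _ (Finset.mem_univ _)⟩

lemma isSynchronizing_uniformImage {S : Finset (List β)} (h : q + l ≤ q * k + 1)
    (hS : ∀ i, window y i k ∈ S)
    (hsep : ∀ v ∈ S, ∀ w ∈ S, ∀ r s, imageFactor f l v r = imageFactor f l w s → r = s) :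
    IsSynchronizing (uniformImage f y) q l := by
  intro i j hij
  rw [window_uniformImage_eq_imageFactor h, window_uniformImage_eq_imageFactor h] at hij
  exact congrArg Fin.val (hsep _ (hS _) _ (hS _) _ _ hij)

lemma not_hasCircuit_of_forall {x : ℕ → α} {n : ℕ} [NeZero n] {S : Finset (List α)}
    (hS : ∀ i, window x i (n + 1) ∈ S)
    (hcircular : ∀ w : Fin n → α, ∃ p : Fin n,
      window (fun k => w (Fin.ofNat n k)) p (n + 1) ∉ S) :
    ¬HasCircuit x n := by
  rintro ⟨c, hper, hc⟩
  obtain ⟨p, hp⟩ := hcircular fun k => c k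
  obtain ⟨i, hi⟩ := isFactorOfInf_window_iff.1 (hc p)
  refine hp ?_
  simp only [Fin.val_ofNat, hper.map_mod_nat, ← hi, hS]

end FactorSets

section FixedPoints

variable {q : ℕ} [q.AtLeastTwo] {f : α → Fin q → α}

/-- The infinite word starting with `a` that is fixed by the `q`-uniform morphism `f`, provided that
the image of `a` starts with `a`. -/
def fixedWord (f : α → Fin q → α) (a : α) (n : ℕ) : α :=
  if n = 0 then a else f (fixedWord f a (n / q)) (Fin.ofNat q n)
termination_by n
decreasing_by exact Nat.div_lt_self (by omega) Nat.AtLeastTwo.one_lt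

lemma fixedWord_zero (f : α → Fin q → α) (a : α) : fixedWord f a 0 = a := by
  rw [fixedWord, if_pos rfl]

lemma uniformImage_fixedWord {a : α} (ha : f a 0 = a) :
    uniformImage f (fixedWord f a) = fixedWord f a := by
  funext n
  rw [uniformImage]
  conv_rhs => rw [fixedWord]
  split_ifs with hn
  · rw [hn, Nat.zero_div, fixedWord_zero]
    exact ha
  · rfl

lemma window_mem_of_uniformImage_eq [DecidableEq α] {x : ℕ → α} {l : ℕ} {S : Finset (List α)}
    (hx : uniformImage f x = x) (hl : q + l ≤ q * l + 1) (hzero : window x 0 l ∈ S)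
    (hS : imageFactors f l S ⊆ S) (i : ℕ) : window x i l ∈ S := by
  induction i using Nat.strong_induction_on with
  | _ i ih =>
    rcases Nat.eq_zero_or_pos i with rfl | hi
    · exact hzero
    · rw [← hx]
      exact hS (window_uniformImage_mem hl (ih _ (Nat.div_lt_self hi Nat.AtLeastTwo.one_lt)))

end FixedPoints

section QuaternaryWord

/-- The 3-uniform morphism `0 ↦ 032, 1 ↦ 203, 2 ↦ 213, 3 ↦ 123`. -/
def quaternaryMorphism : Fin 4 → Fin 3 → Fin 4 :=
  ![![0, 3, 2], ![2, 0, 3], ![2, 1, 3], ![1, 2, 3]]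

/-- The fixed point of `quaternaryMorphism` starting with `0`, which has no circuit of positive
length. -/
def quaternaryWord : ℕ → Fin 4 :=
  fixedWord quaternaryMorphism 0

/-- The factors of length 2 of `quaternaryWord`. -/
def quaternaryFactorsTwo : Finset (List (Fin 4)) :=
  {[0, 3], [1, 2], [1, 3], [2, 0], [2, 1], [2, 3], [3, 0], [3, 1], [3, 2]}

/-- The factors of length 3 of `quaternaryWord`. -/
def quaternaryFactorsThree : Finset (List (Fin 4)) :=
  imageFactors quaternaryMorphism 3 quaternaryFactorsTwo

lemma uniformImage_quaternaryWord :
    uniformImage quaternaryMorphism quaternaryWord = quaternaryWord :=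
  uniformImage_fixedWord rfl

lemma window_quaternaryWord_mem_two (i : ℕ) : window quaternaryWord i 2 ∈ quaternaryFactorsTwo := by
  refine window_mem_of_uniformImage_eq uniformImage_quaternaryWord (by norm_num) ?_
    (by decide +kernel) i
  have hzero : quaternaryWord 0 = 0 := fixedWord_zero _ _
  have hone : quaternaryWord 1 = 3 := by
    rw [← uniformImage_quaternaryWord]
    exact congrArg (quaternaryMorphism · 1) hzero
  simp [window, List.range_succ, hzero, hone, quaternaryFactorsTwo]

lemma window_quaternaryWord_mem_three (i : ℕ) :
    window quaternaryWord i 3 ∈ quaternaryFactorsThree := by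
  rw [← uniformImage_quaternaryWord]
  exact window_uniformImage_mem (by norm_num) (window_quaternaryWord_mem_two _)

lemma window_quaternaryWord_mem {l : ℕ} (hl : l ≤ 7) (i : ℕ) :
    window quaternaryWord i l ∈ imageFactors quaternaryMorphism l quaternaryFactorsThree := by
  rw [← uniformImage_quaternaryWord]
  exact window_uniformImage_mem (by omega) (window_quaternaryWord_mem_three _)

lemma not_hasCircuit_quaternaryWord_of_lt_five {n : ℕ} (hn : 0 < n) (hlt : n < 5) :
    ¬HasCircuit quaternaryWord n := by
  have hmem := window_quaternaryWord_mem (l := n + 1) (by omega)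
  interval_cases n <;> exact not_hasCircuit_of_forall hmem (by decide +kernel)

lemma isSynchronizing_quaternaryWord : IsSynchronizing quaternaryWord 3 5 := by
  rw [← uniformImage_quaternaryWord]
  exact isSynchronizing_uniformImage (by norm_num) window_quaternaryWord_mem_three
    (by decide +kernel)

theorem not_hasCircuit_quaternaryWord {n : ℕ} (hn : 0 < n) : ¬HasCircuit quaternaryWord n := by
  induction n using Nat.strong_induction_on with
  | _ n ih =>
    intro hcircuit
    rcases lt_or_ge n 5 with hlt | hge
    · exact not_hasCircuit_quaternaryWord_of_lt_five hn hlt hcircuit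
    · have hsync := isSynchronizing_quaternaryWord.mono hge
      rw [← uniformImage_quaternaryWord] at hcircuit hsync
      obtain ⟨m, rfl, hm⟩ :=
        hcircuit.desubstitute (u := 1) (by decide +kernel) (by decide +kernel) hsync hn
      exact ih m (by omega) (by omega) hm

end QuaternaryWord

section BinaryWord

/-- The 5-uniform morphism `0 ↦ 10110, 1 ↦ 10100, 2 ↦ 00111, 3 ↦ 00101`. -/
def binaryMorphism : Fin 4 → Fin 5 → Fin 2 :=
  ![![1, 0, 1, 1, 0], ![1, 0, 1, 0, 0], ![0, 0, 1, 1, 1], ![0, 0, 1, 0, 1]]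

/-- The image of `quaternaryWord` under `binaryMorphism`, which has no circuit of length at least
4. -/
def binaryWord : ℕ → Fin 2 :=
  uniformImage binaryMorphism quaternaryWord

lemma window_binaryWord_mem {l : ℕ} (hl : l ≤ 6) (i : ℕ) :
    window binaryWord i l ∈ imageFactors binaryMorphism l quaternaryFactorsTwo :=
  window_uniformImage_mem (by omega) (window_quaternaryWord_mem_two _)

lemma not_hasCircuit_binaryWord_of_lt_six {n : ℕ} (hn : 4 ≤ n) (hlt : n < 6) :
    ¬HasCircuit binaryWord n := by
  have hmem := window_binaryWord_mem (l := n + 1) (by omega)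
  interval_cases n <;> exact not_hasCircuit_of_forall hmem (by decide +kernel)

lemma isSynchronizing_binaryWord : IsSynchronizing binaryWord 5 6 :=
  isSynchronizing_uniformImage (by norm_num) window_quaternaryWord_mem_two (by decide +kernel)

theorem not_hasCircuit_binaryWord {n : ℕ} (hn : 4 ≤ n) : ¬HasCircuit binaryWord n := by
  intro hcircuit
  rcases lt_or_ge n 6 with hlt | hge
  · exact not_hasCircuit_binaryWord_of_lt_six hn hlt hcircuit
  · obtain ⟨m, rfl, hm⟩ := hcircuit.desubstitute (u := 3) (by decide +kernel) (by decide +kernel)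
      (isSynchronizing_binaryWord.mono hge) (by omega)
    exact not_hasCircuit_quaternaryWord (by omega) hm

end BinaryWord

end InfiniteWord

/-- There exists an infinite word over a 2-letter alphabet that simultaneously
avoids every circular formula `C_i` with `i ≥ 4`. -/
theorem stmt_2 :
    ∃ x : ℕ → Fin 2, ∀ i, 4 ≤ i → ¬ ∃ h : ℕ → List (Fin 2), CircOcc i h x := by
  refine ⟨InfiniteWord.binaryWord, fun t ht => ?_⟩
  rintro ⟨h, hocc⟩
  obtain ⟨n, htn, hcircuit⟩ := InfiniteWord.exists_hasCircuit_of_circOcc (by omega) hocc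
  exact InfiniteWord.not_hasCircuit_binaryWord (ht.trans htn) hcircuit
end

section
/- There exists an infinite word over a 2-letter alphabet that avoids the formula ABCBA.CBABC, i.e., there is no map h assigning nonempty finite binary words to the variables A, B, C such that both h(A)h(B)h(C)h(B)h(A) and h(C)h(B)h(A)h(B)h(C) are factors of the infinite word. (Hence λ(ABCBA.CBABC) = 2.) -/
/-! The avoiding word is a Toeplitz word: a periodic binary skeleton with a hole at every sixteenth
position, the holes being filled with the paperfolding word. A long repetition whose period is a
multiple of the skeleton period would induce on the holes a repetition that the paperfolding word
does not contain; any other long repetition already clashes within the skeleton. Hence every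
repetition of period at least `34` has exponent less than `4/3`.

In an occurrence of `ABCBA` the factors `BCB` and `ABCBA` are repetitions of periods `|BC|` and
`|ABCB|`. When `|C| ≤ |A|`, which may be assumed since the formula is symmetric in `A` and `C`,
the bound on exponents therefore bounds the lengths of all three variables, and the skeleton alone
refutes each of the finitely many remaining configurations.
-/

namespace FormulaAvoidance

variable {α : Type*}

/-- `u` occurs in the infinite word `x` at position `i`. -/
def OccursAt (u : List α) (x : ℕ → α) (i : ℕ) : Prop :=
  u = (List.range u.length).map fun j => x (i + j)

/-- The factors of length `l` of the infinite word `x` at positions `i` and `j` coincide. -/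
def SameBlock (x : ℕ → α) (l i j : ℕ) : Prop :=
  ∀ k < l, x (i + k) = x (j + k)

/-- Every repetition of period at least `n` in `x` has exponent less than `4/3`: a block of
length `l` that recurs at distance `P ≥ n` satisfies `l < P / 3`. -/
def HasShortRepetitions (x : ℕ → α) (n : ℕ) : Prop :=
  ∀ ⦃P l i : ℕ⦄, n ≤ P → SameBlock x l i (i + P) → 3 * l < P

theorem SameBlock.mono {x : ℕ → α} {l m i j : ℕ} (h : SameBlock x m i j) (hl : l ≤ m) :
    SameBlock x l i j :=
  fun k hk => h k (hk.trans_le hl)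

theorem occursAt_append {u v : List α} {x : ℕ → α} {i : ℕ} :
    OccursAt (u ++ v) x i ↔ OccursAt u x i ∧ OccursAt v x (i + u.length) := by
  simp only [OccursAt, List.length_append, List.range_add, List.map_append, List.map_map,
    Function.comp_def, Nat.add_assoc]
  exact ⟨fun h => List.append_inj h (by simp), fun ⟨hu, hv⟩ => congrArg₂ (· ++ ·) hu hv⟩

theorem OccursAt.getElem {u : List α} {x : ℕ → α} {i k : ℕ} (h : OccursAt u x i)
    (hk : k < u.length) : u[k] = x (i + k) := by
  rw [List.getElem_of_eq h hk, List.getElem_map, List.getElem_range]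

theorem OccursAt.sameBlock {u : List α} {x : ℕ → α} {i j : ℕ} (hi : OccursAt u x i)
    (hj : OccursAt u x j) : SameBlock x u.length i j :=
  fun _ hk => (hi.getElem hk).symm.trans (hj.getElem hk)

theorem HasShortRepetitions.length_lt {x : ℕ → α} {n i : ℕ} {A B C : List α}
    (hx : HasShortRepetitions x n) (hCA : C.length ≤ A.length)
    (h : OccursAt (A ++ B ++ C ++ B ++ A) x i) :
    B.length + C.length < n ∧ A.length < n := by
  simp only [occursAt_append, List.length_append] at h
  obtain ⟨⟨⟨⟨hA, hB⟩, -⟩, hB'⟩, hA'⟩ := h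
  have repeat_B (hn : n ≤ B.length + C.length) : 3 * B.length < B.length + C.length :=
    hx hn (hB.sameBlock (by convert hB' using 1; omega))
  have repeat_A (hn : n ≤ A.length + 2 * B.length + C.length) :
      3 * A.length < A.length + 2 * B.length + C.length :=
    hx hn (hA.sameBlock (by convert hA' using 1; omega))
  omega

/-- The Toeplitz word that carries `y` on the multiples of `h` and follows `s` elsewhere. -/
def toeplitz (h : ℕ) (s y : ℕ → α) (i : ℕ) : α :=
  if h ∣ i then y (i / h) else s i

theorem exists_lt_add_eq_mul_add {h r : ℕ} (hr : r < h) (i : ℕ) :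
    ∃ k < h, ∃ t, i + k = h * t + r := by
  have hdiv := Nat.div_add_mod (i + (h - 1 - r)) h
  have hmod := Nat.mod_lt (i + (h - 1 - r)) (r.zero_le.trans_lt hr)
  exact ⟨h - 1 - (i + (h - 1 - r)) % h, by omega, (i + (h - 1 - r)) / h, by omega⟩

theorem exists_sameBlock_of_sameBlock_toeplitz {h l i d : ℕ} {s y : ℕ → α} (hh : 0 < h)
    (H : SameBlock (toeplitz h s y) (h * l) i (i + h * d)) :
    ∃ t, SameBlock y l t (t + d) := by
  obtain ⟨r, hr, t, ht⟩ := exists_lt_add_eq_mul_add hh i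
  refine ⟨t, fun k hk => ?_⟩
  have hlt : r + h * k < h * l := by nlinarith
  have hleft : i + (r + h * k) = h * (t + k) := by linarith
  have hright : i + h * d + (r + h * k) = h * (t + d + k) := by linarith
  simpa [toeplitz, hleft, hright, hh] using H _ hlt

/-- The paperfolding word: its letter at `2 ^ v * (2 * u + 1)` is the parity of `u`. The letter at
`0` is a convention. -/
def paperfolding (t : ℕ) : Fin 2 :=
  Fin.ofNat 2 (ordCompl[2] t / 2)

theorem paperfolding_two_pow_mul (v u : ℕ) :
    paperfolding (2 ^ v * (2 * u + 1)) = Fin.ofNat 2 u := by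
  have hodd : ordCompl[2] (2 * u + 1) = 2 * u + 1 := by
    simp [Nat.factorization_eq_zero_of_not_dvd (show ¬ 2 ∣ 2 * u + 1 by omega)]
  rw [paperfolding, Nat.ordCompl_mul, hodd, Nat.ordCompl_self_pow Nat.prime_two]
  congr 1
  omega

theorem not_sameBlock_paperfolding {d c : ℕ} (hd : d ≠ 0) (hd_even : Even d) (hc : Odd c)
    (t : ℕ) : ¬ SameBlock paperfolding d t (t + d * c) := by
  intro H
  obtain ⟨v, m, hm, rfl⟩ : ∃ v m, Odd m ∧ d = 2 ^ (v + 1) * m := by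
    obtain ⟨e, rfl⟩ := hd_even.two_dvd
    obtain ⟨v, m, hm, rfl⟩ := Nat.exists_eq_two_pow_mul_odd (n := e) (by omega)
    exact ⟨v, m, hm, by ring⟩
  obtain ⟨k, hk, u, hu⟩ :=
    exists_lt_add_eq_mul_add (Nat.pow_lt_pow_succ Nat.one_lt_two (n := v)) t
  replace hu : t + k = 2 ^ v * (2 * u + 1) := hu.trans (by ring)
  have hkd : k < 2 ^ (v + 1) * m := hk.trans_le (Nat.le_mul_of_pos_right _ hm.pos)
  have hshift : t + 2 ^ (v + 1) * m * c + k = 2 ^ v * (2 * (u + m * c) + 1) := by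
    linear_combination hu
  have hval := H k hkd
  rw [hu, hshift, paperfolding_two_pow_mul, paperfolding_two_pow_mul, Fin.ext_iff] at hval
  have hmc := Nat.odd_iff.mp (hm.mul hc)
  simp only [Fin.ofNat] at hval
  omega

/-- The periodic skeleton of the avoiding word. Its period `96 = 6 * 16` is spelled by the binary
digits of the constant, least significant first; the digits at multiples of `16` are placeholders
for the holes. The constant was found by computer search. -/
def skeleton (i : ℕ) : Fin 2 :=
  Fin.ofNat 2 (64586649128014292891775068344 >>> (i % 96))

/-- The infinite binary word avoiding `ABCBA.CBABC`: the skeleton, with its holes at the multiples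
of `16` filled with the paperfolding word. -/
def avoidingWord : ℕ → Fin 2 :=
  toeplitz 16 skeleton paperfolding

/-- The bitmask of the positions outside the holes that carry the letter `a`. It is truncated to
three periods, so that the check `compatible` is only weakened at larger positions. -/
def forced (a : Fin 2) : ℕ :=
  Nat.ofBits fun i : Fin 288 => !decide (16 ∣ i.val) && skeleton i == a

/-- The bitmask of the offsets `k` at which the skeleton forces different letters at positions
`i + k` and `j + k`. -/
def clashMask (i j : ℕ) : ℕ :=
  (forced 0 >>> i &&& forced 1 >>> j) ||| (forced 1 >>> i &&& forced 0 >>> j)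

/-- The skeleton does not prevent the blocks of length `l` at positions `i` and `j` from
coinciding: no clash has an offset below `l`. -/
def compatible (i j l : ℕ) : Bool :=
  clashMask i j % 2 ^ l == 0

theorem avoidingWord_of_testBit_forced {a : Fin 2} {r i : ℕ} (h : (forced a).testBit r)
    (hi : i % 96 = r % 96) : avoidingWord i = a := by
  have hr : r < 288 := by
    by_contra! hr
    simp [forced, Nat.testBit_ofBits_ge _ _ hr] at h
  rw [forced, Nat.testBit_ofBits_lt _ _ hr] at h
  simp only [Bool.and_eq_true, Bool.not_eq_true', decide_eq_false_iff_not, beq_iff_eq] at h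
  rw [avoidingWord, toeplitz, if_neg (by omega), ← h.2, skeleton, skeleton, hi]

theorem compatible_of_sameBlock {i j p q l : ℕ} (h : SameBlock avoidingWord l i j)
    (hp : i % 96 = p % 96) (hq : j % 96 = q % 96) : compatible p q l := by
  rw [compatible, beq_iff_eq]
  refine Nat.zero_of_testBit_eq_false fun k => ?_
  rw [Nat.testBit_mod_two_pow, Bool.and_eq_false_imp, decide_eq_true_eq]
  intro hk
  have not_clash {a b : Fin 2} (hab : a ≠ b) :
      (forced a >>> p &&& forced b >>> q).testBit k = false := by
    rw [Bool.eq_false_iff, Nat.testBit_and, Nat.testBit_shiftRight, Nat.testBit_shiftRight, ne_eq,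
      Bool.and_eq_true]
    rintro ⟨ha, hb⟩
    exact hab <| (avoidingWord_of_testBit_forced ha (by omega)).symm.trans <|
      (h k hk).trans (avoidingWord_of_testBit_forced hb (by omega))
  rw [clashMask, Nat.testBit_or, not_clash zero_ne_one, not_clash one_ne_zero, Bool.or_false]

theorem compatible_of_occursAt {u : List (Fin 2)} {i j p q : ℕ} (hi : OccursAt u avoidingWord i)
    (hj : OccursAt u avoidingWord j) (hp : i % 96 = p % 96) (hq : j % 96 = q % 96) :
    compatible p q u.length :=
  compatible_of_sameBlock (hi.sameBlock hj) hp hq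

theorem not_compatible_of_period :
    ∀ P ∈ Finset.Ico 34 130, P ≠ 96 → ∀ i ∈ Finset.range 96,
      ¬ compatible i (i + P) ((P + 2) / 3) := by
  decide +kernel

theorem hasShortRepetitions_avoidingWord : HasShortRepetitions avoidingWord 34 := by
  intro P l i hP H
  by_contra! hl
  by_cases hdvd : 96 ∣ P
  · obtain ⟨j, rfl⟩ := hdvd
    have H' : SameBlock avoidingWord (16 * (2 * j)) i (i + 16 * (2 * j * 3)) := by
      convert H.mono (show 16 * (2 * j) ≤ l by omega) using 2
      ring
    obtain ⟨t, ht⟩ := exists_sameBlock_of_sameBlock_toeplitz (by norm_num) H'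
    exact not_sameBlock_paperfolding (by omega) (even_two_mul j) (by decide) t ht
  -- Compatibility depends on the period modulo `96` only, and `Q ≤ P` needs less overlap.
  · let Q := 34 + (P - 34) % 96
    have hcompat : compatible (i % 96) (i % 96 + Q) ((Q + 2) / 3) :=
      compatible_of_sameBlock (H.mono (by omega)) (by omega) (by omega)
    exact not_compatible_of_period Q (by simp only [Finset.mem_Ico]; omega) (by omega) (i % 96)
      (Finset.mem_range.mpr (by omega)) hcompat

/-- For variables of lengths `a`, `b`, `c`, with the first `B` of `ABCBA` at position `p` and the
first `B` of `CBABC` at position `q` modulo `96`: any two occurrences of the same variable are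
compatible, apart from the two pairs `A`, `A` and `B`, `B` inside `ABCBA`. The summand `96` keeps
the subtraction from truncating. -/
def crossCompatible (a b c p q : ℕ) : Bool :=
  compatible (p + 96 - a) (q + b) a && compatible (p + 2 * b + c) (q + b) a &&
  compatible p q b && compatible q (q + a + b) b && compatible p (q + a + b) b &&
  compatible (p + b + c) q b && compatible (p + b + c) (q + a + b) b &&
  compatible (p + b) (q + 96 - c) c && compatible (p + b) (q + a + 2 * b) c &&
  compatible (q + 96 - c) (q + a + 2 * b) c

theorem no_compatible_configuration :
    ¬ ((List.range' 1 33).any fun b => (List.range' 1 (33 - b)).any fun c =>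
      (List.range 96).any fun p => compatible p (p + b + c) b &&
        (List.range' c (34 - c)).any fun a => compatible (p + 96 - a) (p + 2 * b + c) a &&
          (List.range 96).any fun q => crossCompatible a b c p q) := by
  decide +kernel

theorem not_occursAt_avoidingWord {A B C : List (Fin 2)} {i j : ℕ} (hB : B ≠ [])
    (hC : C ≠ []) (hCA : C.length ≤ A.length)
    (hi : OccursAt (A ++ B ++ C ++ B ++ A) avoidingWord i) :
    ¬ OccursAt (C ++ B ++ A ++ B ++ C) avoidingWord j := by
  intro hj
  obtain ⟨hBC, hA⟩ := hasShortRepetitions_avoidingWord.length_lt hCA hi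
  rw [← List.length_pos_iff] at hB hC
  simp only [occursAt_append, List.length_append] at hi hj
  obtain ⟨⟨⟨⟨A₁, B₁⟩, C₁⟩, B₂⟩, A₂⟩ := hi
  obtain ⟨⟨⟨⟨C₂, B₃⟩, A₃⟩, B₄⟩, C₃⟩ := hj
  set a := A.length
  set b := B.length
  set c := C.length
  set p := (i + a) % 96
  set q := (j + c) % 96
  have hcross : crossCompatible a b c p q := by
    simp only [crossCompatible, Bool.and_eq_true]
    refine ⟨⟨⟨⟨⟨⟨⟨⟨⟨compatible_of_occursAt A₁ A₃ ?_ ?_, compatible_of_occursAt A₂ A₃ ?_ ?_⟩,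
      compatible_of_occursAt B₁ B₃ ?_ ?_⟩, compatible_of_occursAt B₃ B₄ ?_ ?_⟩,
      compatible_of_occursAt B₁ B₄ ?_ ?_⟩, compatible_of_occursAt B₂ B₃ ?_ ?_⟩,
      compatible_of_occursAt B₂ B₄ ?_ ?_⟩, compatible_of_occursAt C₁ C₂ ?_ ?_⟩,
      compatible_of_occursAt C₁ C₃ ?_ ?_⟩, compatible_of_occursAt C₂ C₃ ?_ ?_⟩ <;> omega
  refine no_compatible_configuration ?_
  simp only [List.any_eq_true, Bool.and_eq_true, List.mem_range'_1, List.mem_range]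
  exact ⟨b, by omega, c, by omega, p, by omega, compatible_of_occursAt B₁ B₂ (by omega) (by omega),
    a, by omega, compatible_of_occursAt A₁ A₂ (by omega) (by omega), q, by omega, hcross⟩

end FormulaAvoidance

open FormulaAvoidance

/-- There exists an infinite binary word avoiding the formula `ABCBA.CBABC`. -/
theorem stmt_9 :
    ∃ x : ℕ → Fin 2,
      ¬ ∃ hA hB hC : List (Fin 2),
          hA ≠ [] ∧ hB ≠ [] ∧ hC ≠ [] ∧
          IsFactorOfInf (hA ++ hB ++ hC ++ hB ++ hA) x ∧
          IsFactorOfInf (hC ++ hB ++ hA ++ hB ++ hC) x := by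
  refine ⟨avoidingWord, ?_⟩
  rintro ⟨A, B, C, hA, hB, hC, ⟨i, hi⟩, ⟨j, hj⟩⟩
  rcases le_total C.length A.length with hCA | hAC
  · exact not_occursAt_avoidingWord hB hC hCA hi hj
  · exact not_occursAt_avoidingWord hB hA hAC hj hi
end

section
/- The number of binary words of length n avoiding the formula ABCBA.CBABC grows exponentially: there exist a real constant c > 1 and N such that for every n ≥ N, the number of words of length n over {0,1} containing no occurrence of ABCBA.CBABC is at least c^n. -/
/-- The finite binary word `w` avoids the formula `ABCBA.CBABC`. -/
def AvoidsABCBA (w : List (Fin 2)) : Prop :=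
  ¬ ∃ hA hB hC : List (Fin 2),
      hA ≠ [] ∧ hB ≠ [] ∧ hC ≠ [] ∧
      (hA ++ hB ++ hC ++ hB ++ hA) <:+: w ∧
      (hC ++ hB ++ hA ++ hB ++ hC) <:+: w

/-!
The idea is to substitute eight binary blocks of length 240 into the words over eight letters in
which no repetition has exponent at least `4/3`. There are at least `2 ^ m` such words of length
`m`: extending one by a letter on the left can only fail through a repeated prefix, and the lengths
of the words that remain when these prefixes are removed give a recurrence which forces the number
to double.

The encoded words avoid the formula. Since a block is recognised by any 40 consecutive letters at a
known position, and 60 consecutive letters determine the position modulo 240, the encoded words have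
no repetition of exponent at least `4/3` and period at least 60. In an occurrence of the formula
with `|A| ≤ |C|`, the words `CBABC`, `BAB` and `BCB` are repetitions with periods `|CBAB|`, `|BA|`
and `|BC|`, and if none of them is excluded in this way, then `|CBAB| < 120`. The fragments are then
so short that each meets at most two consecutive blocks, and so they already occur in the encoding
of a single word of length 57 that contains every pair of distinct letters. That none do is a finite
computation, carried out with sets of positions represented as bit masks.
-/

open Finset

section Factors

variable {α β : Type*} {r s : ℕ → α} {i j k l : ℕ}

/-- The factor of length `l` of `s` at position `i` equals the factor of length `l` of `t` at
position `j`. -/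
def FactorEq (s : ℕ → α) (i : ℕ) (t : ℕ → α) (j l : ℕ) : Prop :=
  ∀ x < l, s (i + x) = t (j + x)

theorem FactorEq.symm {t : ℕ → α} (h : FactorEq s i t j l) : FactorEq t j s i l :=
  fun x hx => (h x hx).symm

theorem FactorEq.trans {t : ℕ → α} (h : FactorEq r i s j l) (h' : FactorEq s j t k l) :
    FactorEq r i t k l :=
  fun x hx => (h x hx).trans (h' x hx)

theorem FactorEq.slice {t : ℕ → α} {m : ℕ} (h : FactorEq s i t j l) (d : ℕ) (hd : d + m ≤ l) :
    FactorEq s (i + d) t (j + d) m := by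
  intro x hx
  simpa only [Nat.add_assoc] using h (d + x) (by omega)

theorem FactorEq.transfer {t : ℕ → β} {f : β → α} (hf : f.Injective) {i' j' L M : ℕ} (d e : ℕ)
    (h : FactorEq s (i + d) s (j + e) l) (hi : FactorEq s i (f ∘ t) i' L)
    (hj : FactorEq s j (f ∘ t) j' M) (hd : d + l ≤ L) (he : e + l ≤ M) :
    FactorEq t (i' + d) t (j' + e) l := fun x hx =>
  hf (((hi.slice d hd).symm.trans (h.trans (hj.slice e he))) x hx)

end Factors

section RepetitionFree

variable {α : Type*} {r n p q e : ℕ} {u v : List α}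

/-- No factor of `u` of length `p + e` has a period `p ≤ r * e`; for `0 < r` this says that all
repetitions in `u` have exponent less than `1 + 1 / r`. -/
def RepetitionFree (r : ℕ) (u : List α) : Prop :=
  ∀ k p e, 0 < p → p ≤ r * e → k + p + e ≤ u.length → ¬ FactorEq (u[·]?) k (u[·]?) (k + p) e

theorem RepetitionFree.drop (hu : RepetitionFree r u) (m : ℕ) : RepetitionFree r (u.drop m) := by
  intro k p e hp hpe hk hrep
  rw [List.length_drop] at hk
  refine hu (m + k) p e hp hpe (by omega) fun x hx => ?_
  simpa only [List.getElem?_drop, Nat.add_assoc] using hrep x hx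

/-- The period of the repeated prefix is `r * q + m + 1`, so that its excess can be shortened to
the least admissible value `q + 1`. -/
theorem exists_repeated_prefix (ht : RepetitionFree r u.tail) (hu : ¬ RepetitionFree r u) :
    ∃ q m, m < r ∧ r * q + m + 1 + (q + 1) ≤ u.length ∧
      FactorEq (u[·]?) 0 (u[·]?) (r * q + m + 1) (q + 1) := by
  simp only [RepetitionFree, not_forall, not_not] at hu
  obtain ⟨k, p, e, hp, hpe, hk, hrep⟩ := hu
  obtain rfl : k = 0 := by
    by_contra hk0
    refine ht (k - 1) p e hp hpe (by rw [List.length_tail]; omega) fun x hx => ?_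
    simp only [List.getElem?_tail]
    convert hrep x hx using 2 <;> omega
  have hr : 0 < r := Nat.pos_of_ne_zero fun h => by simp [h] at hpe; omega
  have hq : (p - 1) / r < e := Nat.div_lt_of_lt_mul (by omega)
  have hdiv := Nat.div_add_mod (p - 1) r
  refine ⟨(p - 1) / r, (p - 1) % r, Nat.mod_lt _ hr, by omega, ?_⟩
  rw [show r * ((p - 1) / r) + (p - 1) % r + 1 = p by omega]
  simpa only [Nat.add_zero, Nat.zero_add] using hrep.slice 0 (by omega)

theorem eq_of_drop_eq_of_repeated_prefix (hu : FactorEq (u[·]?) 0 (u[·]?) p e)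
    (hv : FactorEq (v[·]?) 0 (v[·]?) p e) (hep : e ≤ p) (h : u.drop e = v.drop e) : u = v := by
  have hfar : ∀ x, e ≤ x → u[x]? = v[x]? := fun x hx => by
    simpa only [List.getElem?_drop, Nat.add_sub_cancel' hx] using congrArg (·[x - e]?) h
  refine List.ext_getElem? fun x => ?_
  rcases lt_or_ge x e with hx | hx
  · have hux := hu x hx
    have hvx := hv x hx
    simp only [Nat.zero_add] at hux hvx
    rw [hux, hvx, hfar _ (by omega)]
  · exact hfar x hx

variable [Fintype α]

variable (α r n) in
/-- The words of length `n` over `α` without repetitions of exponent at least `1 + 1 / r`. -/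
noncomputable def repetitionFreeWords : Finset (List α) :=
  Set.Finite.toFinset (s := {u | u.length = n ∧ RepetitionFree r u})
    ((List.finite_length_eq α n).subset fun _ hu => hu.1)

theorem mem_repetitionFreeWords :
    u ∈ repetitionFreeWords α r n ↔ u.length = n ∧ RepetitionFree r u := by
  rw [repetitionFreeWords, Set.Finite.mem_toFinset, Set.mem_ofPred_eq]

variable (α r n) in
/-- The one-letter left extensions of the words in `repetitionFreeWords α r n`. -/
noncomputable def leftExtensions : Finset (List α) :=
  (univ ×ˢ repetitionFreeWords α r n).map
    ⟨Function.uncurry List.cons, Function.Injective2.uncurry fun _ _ _ _ => List.cons.inj⟩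

theorem card_leftExtensions :
    #(leftExtensions α r n) = Fintype.card α * #(repetitionFreeWords α r n) := by
  rw [leftExtensions, card_map, card_product, card_univ]

theorem mem_leftExtensions :
    u ∈ leftExtensions α r n ↔ u.length = n + 1 ∧ RepetitionFree r u.tail := by
  cases u with
  | nil => simp [leftExtensions]
  | cons x u => simp [leftExtensions, mem_repetitionFreeWords]

open Classical in
theorem card_repeated_prefix_le (hqp : q + 1 ≤ p) (hqn : q ≤ n) :
    #{u ∈ leftExtensions α r n | FactorEq (u[·]?) 0 (u[·]?) p (q + 1)} ≤
      #(repetitionFreeWords α r (n - q)) := by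
  refine card_le_card_of_injOn (List.drop (q + 1)) (fun u hu => ?_) fun u hu v hv huv => ?_
  · obtain ⟨hlen, hfree⟩ := mem_leftExtensions.1 (mem_filter.1 hu).1
    refine mem_repetitionFreeWords.2 ⟨by rw [List.length_drop]; omega, ?_⟩
    simpa only [List.drop_tail] using hfree.drop q
  · exact eq_of_drop_eq_of_repeated_prefix (mem_filter.1 hu).2 (mem_filter.1 hv).2 hqp huv

open Classical in
/-- A left extension of a repetition-free word fails to be repetition-free only through a repeated
prefix, and it is determined by what remains after that prefix is removed. -/
theorem card_mul_card_repetitionFreeWords_le :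
    Fintype.card α * #(repetitionFreeWords α r n) ≤
      #(repetitionFreeWords α r (n + 1)) +
        r * ∑ k ∈ range (n + 1), #(repetitionFreeWords α r k) := by
  let bad (q m : ℕ) : Finset (List α) :=
    {u ∈ leftExtensions α r n | FactorEq (u[·]?) 0 (u[·]?) (r * q + m + 1) (q + 1)}
  have hcover : leftExtensions α r n ⊆ repetitionFreeWords α r (n + 1) ∪
      (range (n + 1)).biUnion fun q => (range r).biUnion (bad q) := fun u hu => by
    obtain ⟨hlen, hfree⟩ := mem_leftExtensions.1 hu
    by_cases hgood : RepetitionFree r u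
    · exact mem_union_left _ (mem_repetitionFreeWords.2 ⟨hlen, hgood⟩)
    · obtain ⟨q, m, hm, hle, hrep⟩ := exists_repeated_prefix hfree hgood
      refine mem_union_right _ (mem_biUnion.2 ⟨q, mem_range.2 (by omega), ?_⟩)
      exact mem_biUnion.2 ⟨m, mem_range.2 hm, mem_filter.2 ⟨hu, hrep⟩⟩
  have hbad : ∀ q ∈ range (n + 1), #((range r).biUnion (bad q)) ≤
      r * #(repetitionFreeWords α r (n - q)) := fun q hq => by
    refine (card_biUnion_le_card_mul _ _ _ fun m hm => ?_).trans_eq (by rw [card_range])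
    have hqr : q ≤ r * q := Nat.le_mul_of_pos_left q (Nat.zero_lt_of_lt (mem_range.1 hm))
    exact card_repeated_prefix_le (by omega) (mem_range_succ_iff.1 hq)
  calc Fintype.card α * #(repetitionFreeWords α r n) = #(leftExtensions α r n) :=
        card_leftExtensions.symm
    _ ≤ _ := card_le_card hcover
    _ ≤ _ := card_union_le _ _
    _ ≤ #(repetitionFreeWords α r (n + 1)) +
          ∑ q ∈ range (n + 1), r * #(repetitionFreeWords α r (n - q)) := by
      gcongr
      exact card_biUnion_le.trans (sum_le_sum hbad)
    _ = _ := by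
      rw [← mul_sum, ← sum_range_reflect (fun k => #(repetitionFreeWords α r k))]
      simp only [Nat.add_sub_cancel]

theorem two_pow_le_card_repetitionFreeWords (hα : 2 * r + 2 ≤ Fintype.card α) (n : ℕ) :
    2 ^ n ≤ #(repetitionFreeWords α r n) := by
  suffices h : 2 ^ n ≤ #(repetitionFreeWords α r n) ∧
      ∑ k ∈ range (n + 1), #(repetitionFreeWords α r k) ≤ 2 * #(repetitionFreeWords α r n) from h.1
  induction n with
  | zero =>
    have hnil : [] ∈ repetitionFreeWords α r 0 :=
      mem_repetitionFreeWords.2 ⟨rfl, fun k p e hp _ hk => by simp at hk; omega⟩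
    have := card_pos.2 ⟨_, hnil⟩
    simp only [pow_zero, zero_add, sum_range_one]
    omega
  | succ n ih =>
    obtain ⟨hpow, hsum⟩ := ih
    have hdouble : 2 * #(repetitionFreeWords α r n) ≤ #(repetitionFreeWords α r (n + 1)) := by
      have := card_mul_card_repetitionFreeWords_le (α := α) (r := r) (n := n)
      nlinarith
    rw [sum_range_succ, pow_succ]
    omega

end RepetitionFree

section BitMasks

variable {L Y Z t e k p i j : ℕ} {l : List (ℕ × ℕ)} {R S : ℕ}

/-- The set of the positions `i < L` at which the binary expansions of `Y` and `Z` agree, as a bit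
mask. -/
def agreeMask (L Y Z : ℕ) : ℕ := (Y ^^^ Z ^^^ (2 ^ L - 1)) % 2 ^ L

theorem testBit_agreeMask :
    (agreeMask L Y Z).testBit i ↔ i < L ∧ Y.testBit i = Z.testBit i := by
  rw [agreeMask, Nat.testBit_mod_two_pow, Nat.testBit_xor, Nat.testBit_xor,
    Nat.testBit_two_pow_sub_one]
  by_cases hi : i < L <;> cases Y.testBit i <;> cases Z.testBit i <;> simp [hi]

/-- The set of the positions at which a run of `k` ones of `e` begins, provided `k ≤ 2 ^ t`; the
number `t` of halvings of `k` makes the recursion structural. -/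
def runMask (e : ℕ) : ℕ → ℕ → ℕ
  | 0, _ => e
  | t + 1, k => runMask e t (k - k / 2) &&& runMask e t (k - k / 2) >>> (k / 2)

theorem testBit_runMask (hk : 0 < k) (hkt : k ≤ 2 ^ t) :
    (runMask e t k).testBit i ↔ ∀ x < k, e.testBit (i + x) := by
  induction t generalizing k i with
  | zero =>
    obtain rfl : k = 1 := by rw [pow_zero] at hkt; omega
    simp [runMask]
  | succ t ih =>
    rw [pow_succ] at hkt
    rw [runMask, Nat.testBit_and, Nat.testBit_shiftRight, Bool.and_eq_true,
      ih (by omega) (by omega), ih (by omega) (by omega)]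
    refine ⟨fun ⟨hlow, hhigh⟩ x hx => ?_, fun h => ⟨fun x hx => h x (by omega), fun x hx => ?_⟩⟩
    · rcases lt_or_ge x (k - k / 2) with hx' | hx'
      · exact hlow x hx'
      · convert hhigh (x - k / 2) (by omega) using 2
        omega
    · convert h (k / 2 + x) (by omega) using 2
      omega

/-- The set of the positions `i` such that the first `L` bits of `Y` and of `Z` have the same
factor of length `k` at `i`, provided `0 < k ≤ 128`. -/
def commonMask (L Y Z k : ℕ) : ℕ := runMask (agreeMask L Y Z) 7 k

theorem testBit_commonMask (hk : 0 < k) (hk' : k ≤ 128) :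
    (commonMask L Y Z k).testBit i ↔ i + k ≤ L ∧ FactorEq Y.testBit i Z.testBit i k := by
  rw [commonMask, testBit_runMask hk hk']
  simp only [testBit_agreeMask]
  refine ⟨fun h => ⟨?_, fun x hx => (h x hx).2⟩, fun h x hx => ⟨by omega, h.2 x hx⟩⟩
  have := (h (k - 1) (by omega)).1
  omega

/-- The set of the positions `i` such that the first `L` bits of `Z` have the same factor of
length `k` at `i` and at `i + p`, provided `0 < k ≤ 128`. -/
def repeatMask (L Z p k : ℕ) : ℕ := commonMask (L - p) Z (Z >>> p) k

theorem testBit_repeatMask (hk : 0 < k) (hk' : k ≤ 128) :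
    (repeatMask L Z p k).testBit i ↔
      i + p + k ≤ L ∧ FactorEq Z.testBit i Z.testBit (i + p) k := by
  rw [repeatMask, testBit_commonMask hk hk']
  refine and_congr (by omega) (forall₂_congr fun x _ => ?_)
  rw [Nat.testBit_shiftRight, ← Nat.add_assoc, Nat.add_comm p]

theorem not_factorEq_of_repeatMask_eq_zero (h : repeatMask L Z p k = 0) (hk : 0 < k)
    (hk' : k ≤ 128) (hi : i + p + k ≤ L) : ¬ FactorEq Z.testBit i Z.testBit (i + p) k :=
  fun hrep => by simpa [h] using (testBit_repeatMask hk hk').2 ⟨hi, hrep⟩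

/-- A test that for no positions `i` in the mask `R` and `j` in the mask `S` do the bits `i + d` and
`j + d'` of `Z` agree for all `(d, d')` in the list. The pairs of positions are sorted by the common
value of their bits at one offset after the other until one of the masks is empty. -/
def separated (Z : ℕ) : List (ℕ × ℕ) → ℕ → ℕ → Bool
  | [], R, S => R == 0 || S == 0
  | (d, d') :: l, R, S => R == 0 || S == 0 ||
      (separated Z l (R &&& Z >>> d) (S &&& Z >>> d') &&
        separated Z l (R ^^^ (R &&& Z >>> d)) (S ^^^ (S &&& Z >>> d')))

theorem exists_ne_of_separated (h : separated Z l R S) (hi : R.testBit i) (hj : S.testBit j) :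
    ∃ d ∈ l, Z.testBit (i + d.1) ≠ Z.testBit (j + d.2) := by
  induction l generalizing R S with
  | nil =>
    rw [separated, Bool.or_eq_true, beq_iff_eq, beq_iff_eq] at h
    rcases h with rfl | rfl <;> simp at hi hj
  | cons d l ih =>
    by_contra! hagree
    have hd : Z.testBit (d.1 + i) = Z.testBit (d.2 + j) := by
      simpa only [Nat.add_comm] using hagree d List.mem_cons_self
    simp only [separated, Bool.or_eq_true, Bool.and_eq_true, beq_iff_eq] at h
    rcases h with (rfl | rfl) | ⟨hone, hzero⟩
    · simp at hi
    · simp at hj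
    · have hrest : ¬ ∃ d ∈ l, Z.testBit (i + d.1) ≠ Z.testBit (j + d.2) := by
        push Not
        exact fun d' hd' => hagree d' (List.mem_cons_of_mem _ hd')
      cases hbit : Z.testBit (d.1 + i) with
      | true => exact hrest (ih hone (by simp [hi, hbit]) (by simp [hj, ← hd, hbit]))
      | false => exact hrest (ih hzero (by simp [hi, hbit]) (by simp [hj, ← hd, hbit]))

end BitMasks

section Occurrences

variable {α β : Type*} {s : ℕ → β} {a b c i j : ℕ}

/-- An occurrence of the formula `ABCBA.CBABC` in the sequence `s`, with images of lengths `a`, `b`,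
`c` of the variables: the image of `CBABC` stands at position `i` and the image of `ABCBA` at
position `j`. -/
structure OccursAt_s18 (s : ℕ → β) (a b c i j : ℕ) : Prop where
  c_repeat : FactorEq s i s (i + (a + 2 * b + c)) c
  b_repeat : FactorEq s (i + c) s (i + (c + (a + b))) b
  a_repeat : FactorEq s j s (j + (a + 2 * b + c)) a
  b_repeat' : FactorEq s (j + a) s (j + (a + (b + c))) b
  c_common : FactorEq s i s (j + (a + b)) c
  b_common : FactorEq s (i + c) s (j + a) b
  a_common : FactorEq s (i + (c + b)) s j a

theorem OccursAt_s18.transfer {t : ℕ → α} {f : α → β} (hf : f.Injective) {i' j' : ℕ}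
    (h : OccursAt_s18 s a b c i j) (hi : FactorEq s i (f ∘ t) i' (a + 2 * b + 2 * c))
    (hj : FactorEq s j (f ∘ t) j' (2 * a + 2 * b + c)) : OccursAt_s18 t a b c i' j' where
  c_repeat := FactorEq.transfer hf 0 _ h.c_repeat hi hi (by omega) (by omega)
  b_repeat := FactorEq.transfer hf _ _ h.b_repeat hi hi (by omega) (by omega)
  a_repeat := FactorEq.transfer hf 0 _ h.a_repeat hj hj (by omega) (by omega)
  b_repeat' := FactorEq.transfer hf _ _ h.b_repeat' hj hj (by omega) (by omega)
  c_common := FactorEq.transfer hf 0 _ h.c_common hi hj (by omega) (by omega)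
  b_common := FactorEq.transfer hf _ _ h.b_common hi hj (by omega) (by omega)
  a_common := FactorEq.transfer hf _ 0 h.a_common hi hj (by omega) (by omega)

/-- The pairs of offsets at which the words `CBABC` and `ABCBA` carry the same letter because
their initial factors `CBA` and `ABC` contain the same variables; `a`, `b`, `c` are the lengths of
the images. -/
def commonOffsets (a b c : ℕ) : List (ℕ × ℕ) :=
  (List.range a).map (fun x => (c + b + x, x)) ++ (List.range b).map (fun x => (c + x, a + x)) ++
    (List.range c).map fun x => (x, a + b + x)

/-- A test that the formula has no occurrence with images of lengths `a`, `b`, `c` in the first `L`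
bits of `Z`: the positions allowed for each fragment by the equalities inside that fragment are
separated by the equalities between the two fragments. -/
def excludesOccurrence (L Z a b c : ℕ) : Bool :=
  separated Z (commonOffsets a b c)
    (repeatMask L Z (a + 2 * b + c) c &&& repeatMask L Z (a + b) b >>> c)
    (repeatMask L Z (a + 2 * b + c) a &&& repeatMask L Z (b + c) b >>> a)

theorem not_occursAt_of_excludesOccurrence {L Z : ℕ} (h : excludesOccurrence L Z a b c)
    (ha : 0 < a) (hb : 0 < b) (hc : 0 < c) (hP : a + 2 * b + c ≤ 128)
    (hi : i + (a + 2 * b + 2 * c) ≤ L) (hj : j + (2 * a + 2 * b + c) ≤ L) :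
    ¬ OccursAt_s18 Z.testBit a b c i j := by
  intro hocc
  have hR : (repeatMask L Z (a + 2 * b + c) c &&& repeatMask L Z (a + b) b >>> c).testBit i := by
    rw [Nat.testBit_and, Nat.testBit_shiftRight, Bool.and_eq_true,
      testBit_repeatMask hc (by omega), testBit_repeatMask hb (by omega), Nat.add_comm c i]
    refine ⟨⟨by omega, hocc.c_repeat⟩, by omega, ?_⟩
    simpa only [Nat.add_assoc] using hocc.b_repeat
  have hS : (repeatMask L Z (a + 2 * b + c) a &&& repeatMask L Z (b + c) b >>> a).testBit j := by
    rw [Nat.testBit_and, Nat.testBit_shiftRight, Bool.and_eq_true,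
      testBit_repeatMask ha (by omega), testBit_repeatMask hb (by omega), Nat.add_comm a j]
    refine ⟨⟨by omega, hocc.a_repeat⟩, by omega, ?_⟩
    simpa only [Nat.add_assoc] using hocc.b_repeat'
  obtain ⟨d, hd, hne⟩ := exists_ne_of_separated h hR hS
  simp only [commonOffsets, List.mem_append, List.mem_map, List.mem_range] at hd
  rcases hd with (⟨x, hx, rfl⟩ | ⟨x, hx, rfl⟩) | ⟨x, hx, rfl⟩
  · exact hne (by simpa only [Nat.add_assoc] using hocc.a_common x hx)
  · exact hne (by simpa only [Nat.add_assoc] using hocc.b_common x hx)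
  · exact hne (by simpa only [Nat.add_assoc] using hocc.c_common x hx)

theorem FactorEq.of_append {w y z : List β}
    (h : FactorEq (w[·]?) i ((y ++ z)[·]?) 0 (y ++ z).length) :
    FactorEq (w[·]?) i (y[·]?) 0 y.length ∧ FactorEq (w[·]?) (i + y.length) (z[·]?) 0 z.length := by
  rw [List.length_append] at h
  constructor <;> intro x hx
  · simpa only [Nat.zero_add, List.getElem?_append_left hx] using h x (by omega)
  · simpa only [Nat.zero_add, Nat.add_assoc, List.getElem?_append_right (Nat.le_add_right _ _),
      Nat.add_sub_cancel_left] using h (y.length + x) (by omega)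

theorem exists_factorEq_of_infix {w y : List β} (h : y <:+: w) :
    ∃ i, i + y.length ≤ w.length ∧ FactorEq (w[·]?) i (y[·]?) 0 y.length := by
  obtain ⟨i, hi, hget⟩ := List.infix_iff_getElem?.1 h
  refine ⟨i, by omega, fun x hx => ?_⟩
  simpa only [Nat.zero_add, Nat.add_comm i, List.getElem?_eq_getElem hx] using hget x hx

theorem exists_occursAt_of_infix {w A B C : List β} (h : A ++ B ++ C ++ B ++ A <:+: w)
    (h' : C ++ B ++ A ++ B ++ C <:+: w) :
    ∃ i j, i + (A.length + 2 * B.length + 2 * C.length) ≤ w.length ∧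
      j + (2 * A.length + 2 * B.length + C.length) ≤ w.length ∧
      OccursAt_s18 (w[·]?) A.length B.length C.length i j := by
  obtain ⟨j, hjw, hj⟩ := exists_factorEq_of_infix h
  obtain ⟨i, hiw, hi⟩ := exists_factorEq_of_infix h'
  simp only [List.append_assoc] at hi hj
  obtain ⟨hjA, hj⟩ := hj.of_append
  obtain ⟨hjB, hj⟩ := hj.of_append
  obtain ⟨hjC, hj⟩ := hj.of_append
  obtain ⟨hjB', hjA'⟩ := hj.of_append
  obtain ⟨hiC, hi⟩ := hi.of_append
  obtain ⟨hiB, hi⟩ := hi.of_append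
  obtain ⟨hiA, hi⟩ := hi.of_append
  obtain ⟨hiB', hiC'⟩ := hi.of_append
  simp only [List.length_append] at hiw hjw
  refine ⟨i, j, by omega, by omega, ?_, ?_, ?_, ?_, ?_, ?_, ?_⟩
  · convert hiC.trans hiC'.symm using 1; omega
  · convert hiB.trans hiB'.symm using 1; omega
  · convert hjA.trans hjA'.symm using 1; omega
  · convert hjB.trans hjB'.symm using 1; omega
  · convert hiC.trans hjC.symm using 1; omega
  · exact hiB.trans hjB.symm
  · convert hiA.trans hjA.symm using 1; omega

end Occurrences

section Encoding

variable {u : List (Fin 8)} {x y : Fin 8} {a b c i j k l p r : ℕ}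

/-- The eight binary words of length 240 substituted for the letters; bit `r` of the number is
letter `r` of the word. -/
def block : Fin 8 → ℕ :=
  ![830757945518094348854244260466744314712072089521086492251996328727687528,
    830760262439942267398563513339768887794691925247750945776710400339095912,
    830757945666481203310111165885231433151060593674004833129223477761028456,
    830759957282945693989067502548646333443224646467094681741447446809293160,
    830758018394707235207408810577679138289464889399859307318066968943407464,
    830758760223413659084583743097617245749986312570998468267188218315944296,
    830758875433555979796345339069658344341481262872379010331881302392058216,
    830757945569526033922870576107707446954003916279816938351331248881414504]

/-- The binary word obtained from `u` by substituting blocks, with the same convention as in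
`block`. -/
def encode (u : List (Fin 8)) : ℕ := Nat.ofDigits (2 ^ 240) (u.map block)

/-- A word of length 57 with every pair of distinct letters as a factor. Its encoding, of length
`240 * 57 = 13680`, contains all short factors of encodings of words without equal adjacent
letters. -/
def tour : List (Fin 8) :=
  [0, 1, 0, 2, 0, 3, 0, 4, 0, 5, 0, 6, 0, 7, 1, 2, 1, 3, 1, 4, 1, 5, 1, 6, 1, 7, 2, 3, 2, 4,
   2, 5, 2, 6, 2, 7, 3, 4, 3, 5, 3, 6, 3, 7, 4, 5, 4, 6, 4, 7, 5, 6, 5, 7, 6, 7, 0]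

theorem block_lt : ∀ x, block x < 2 ^ 240 := by decide +kernel

theorem exists_tour_eq : ∀ x y, x ≠ y → ∃ k : Fin 56, tour[(k : ℕ)]? = some x ∧
    tour[(k : ℕ) + 1]? = some y := by decide +kernel

section KernelChecks

set_option maxRecDepth 100000

theorem commonMask_block : ∀ x y, x ≠ y → commonMask 240 (block x) (block y) 40 = 0 := by
  decide +kernel

theorem repeatMask_tour_of_short_period :
    ∀ q < 120, repeatMask 13680 (encode tour) (60 + q) ((60 + q + 2) / 3) = 0 := by
  decide +kernel

theorem repeatMask_tour_of_unaligned_shift :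
    ∀ q < 57, ∀ r < 240, r ≠ 0 → repeatMask 13680 (encode tour) (240 * q + r) 60 = 0 := by
  decide +kernel

/-- The length of `A` is computed from those of `B`, `C` and from the period `P = |ABCB|`; the range
of `b` consists of the values with `1 ≤ |A| ≤ c`. -/
theorem excludesOccurrence_tour :
    ∀ P ∈ List.range 120, ∀ c ∈ List.range P, c = 0 ∨ repeatMask 13680 (encode tour) P c = 0 ∨
      ∀ b ∈ List.range' ((P - 2 * c + 1) / 2) ((P - c + 1) / 2 - (P - 2 * c + 1) / 2),
        b = 0 ∨ excludesOccurrence 13680 (encode tour) (P - (c + 2 * b)) b c := by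
  decide +kernel

end KernelChecks

theorem testBit_encode (hk : k < u.length) (hr : r < 240) :
    (encode u).testBit (240 * k + r) = (block u[k]).testBit r := by
  induction u generalizing k with
  | nil => simp at hk
  | cons x u ih =>
    rw [encode, List.map_cons, Nat.ofDigits_cons, Nat.add_comm (block x),
      Nat.testBit_two_pow_mul_add _ (block_lt x)]
    cases k with
    | zero => simp [hr]
    | succ k =>
      rw [if_neg (by omega), show 240 * (k + 1) + r - 240 = 240 * k + r by omega]
      exact ih (Nat.lt_of_succ_lt_succ hk)

theorem eq_of_factorEq_block (hi : i + 40 ≤ 240)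
    (h : FactorEq (block x).testBit i (block y).testBit i 40) : x = y := by
  by_contra hxy
  have hmask : (commonMask 240 (block x) (block y) 40).testBit i :=
    (testBit_commonMask (by omega) (by omega)).2 ⟨hi, h⟩
  simp [commonMask_block x y hxy] at hmask

theorem not_factorEq_tour_of_short_period (hp : 60 ≤ p) (hp' : p < 180)
    (hi : i + p + (p + 2) / 3 ≤ 13680) :
    ¬ FactorEq (encode tour).testBit i (encode tour).testBit (i + p) ((p + 2) / 3) := by
  have hmask := repeatMask_tour_of_short_period (p - 60) (by omega)
  rw [Nat.add_sub_cancel' hp] at hmask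
  exact not_factorEq_of_repeatMask_eq_zero hmask (by omega) (by omega) hi

theorem modEq_of_factorEq_tour (hi : i + 60 ≤ 13680) (hj : j + 60 ≤ 13680)
    (h : FactorEq (encode tour).testBit i (encode tour).testBit j 60) : i ≡ j [MOD 240] := by
  wlog hij : i ≤ j generalizing i j
  · exact (this hj hi h.symm (by omega)).symm
  by_contra hmod
  obtain ⟨p, rfl⟩ := Nat.exists_eq_add_of_le hij
  have hp : p % 240 ≠ 0 := fun hp => hmod (Nat.left_modEq_add_iff.2 (Nat.dvd_of_mod_eq_zero hp))
  have hmask := repeatMask_tour_of_unaligned_shift (p / 240) (by omega) (p % 240) (by omega) hp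
  rw [Nat.div_add_mod] at hmask
  exact not_factorEq_of_repeatMask_eq_zero hmask (by omega) (by omega) hj h

theorem not_occursAt_tour (ha : 0 < a) (hb : 0 < b) (hac : a ≤ c) (hP : a + 2 * b + c < 120)
    (hi : i + (a + 2 * b + 2 * c) ≤ 13680) (hj : j + (2 * a + 2 * b + c) ≤ 13680) :
    ¬ OccursAt_s18 (encode tour).testBit a b c i j := by
  intro hocc
  rcases excludesOccurrence_tour (a + 2 * b + c) (List.mem_range.2 hP) c
    (List.mem_range.2 (by omega)) with hc | hmask | hexcl
  · omega
  · exact not_factorEq_of_repeatMask_eq_zero hmask (by omega) (by omega) (by omega) hocc.c_repeat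
  · have hb' := (hexcl b (List.mem_range'_1.2 (by omega))).resolve_left hb.ne'
    rw [show a + 2 * b + c - (c + 2 * b) = a by omega] at hb'
    exact not_occursAt_of_excludesOccurrence hb' ha hb (by omega) (by omega) hi hj hocc

theorem getElem_ne_getElem_succ (hu : RepetitionFree 3 u) (hk : k + 1 < u.length) :
    u[k] ≠ u[k + 1] := by
  intro heq
  refine hu k 1 1 one_pos (by omega) (by omega) fun x hx => ?_
  obtain rfl : x = 0 := by omega
  simpa only [Nat.add_zero, List.getElem?_eq_getElem hk,
    List.getElem?_eq_getElem (Nat.lt_of_succ_lt hk), Option.some_inj] using heq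

theorem exists_factorEq_tour (hu : RepetitionFree 3 u) (hl : 0 < l) (hl' : l ≤ 240)
    (hi : i + l ≤ 240 * u.length) :
    ∃ i', i ≡ i' [MOD 240] ∧ i' + l ≤ 13680 ∧
      FactorEq (encode u).testBit i (encode tour).testBit i' l := by
  have hk : i / 240 < u.length := by omega
  obtain ⟨y, hne, hy⟩ : ∃ y, u[i / 240] ≠ y ∧ ∀ h : i / 240 + 1 < u.length, u[i / 240 + 1] = y := by
    by_cases hk' : i / 240 + 1 < u.length
    · exact ⟨_, getElem_ne_getElem_succ hu hk', fun _ => rfl⟩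
    · exact ⟨u[i / 240] + 1, by simp, fun h => absurd h hk'⟩
  obtain ⟨k', hx', hy'⟩ := exists_tour_eq _ _ hne
  obtain ⟨hk₀, hx'⟩ := List.getElem?_eq_some_iff.1 hx'
  obtain ⟨hk₁, hy'⟩ := List.getElem?_eq_some_iff.1 hy'
  refine ⟨240 * k' + i % 240, by simp [Nat.ModEq], by omega, fun x hx => ?_⟩
  rcases lt_or_ge (i % 240 + x) 240 with hr | hr
  · rw [show i + x = 240 * (i / 240) + (i % 240 + x) by omega, Nat.add_assoc,
      testBit_encode hk hr, testBit_encode hk₀ hr, hx']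
  · have hr' : i % 240 + x - 240 < 240 := by omega
    rw [show i + x = 240 * (i / 240 + 1) + (i % 240 + x - 240) by omega,
      show 240 * (k' : ℕ) + i % 240 + x = 240 * (k' + 1) + (i % 240 + x - 240) by omega,
      testBit_encode (by omega) hr', testBit_encode hk₁ hr', hy', hy]

/-- The repetition of the encoding induces one of `u` on the blocks that meet it in at least 40
letters, since these suffice to recognise a block. -/
theorem not_factorEq_encode_of_aligned (hu : RepetitionFree 3 u) (hp : 0 < p)
    (hpl : 240 * p ≤ 3 * l) (hi : i + 240 * p + l ≤ 240 * u.length) :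
    ¬ FactorEq (encode u).testBit i (encode u).testBit (i + 240 * p) l := by
  intro hrep
  set k₀ := (i + 39) / 240
  set k₁ := (i + l + 200) / 240
  refine hu k₀ p (k₁ - k₀) hp (by omega) (by omega) fun x hx => ?_
  have hk : k₀ + x < u.length := by omega
  have hk' : k₀ + p + x < u.length := by omega
  simp only [List.getElem?_eq_getElem hk, List.getElem?_eq_getElem hk', Option.some_inj]
  refine eq_of_factorEq_block (i := i - 240 * (k₀ + x)) (by omega) fun z hz => ?_
  rw [← testBit_encode hk (by omega), ← testBit_encode hk' (by omega)]
  convert hrep (240 * (k₀ + x) + (i - 240 * (k₀ + x) + z) - i) (by omega) using 2 <;> omega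

theorem not_factorEq_encode_of_unaligned (hu : RepetitionFree 3 u) (hp : 180 ≤ p)
    (hmod : p % 240 ≠ 0) (hi : i + p + 60 ≤ 240 * u.length) :
    ¬ FactorEq (encode u).testBit i (encode u).testBit (i + p) 60 := by
  intro hrep
  obtain ⟨i', hii', hi', hfac⟩ :=
    exists_factorEq_tour (i := i) (l := 60) hu (by omega) (by omega) (by omega)
  obtain ⟨j', hjj', hj', hfac'⟩ :=
    exists_factorEq_tour (i := i + p) (l := 60) hu (by omega) (by omega) hi
  have hij := modEq_of_factorEq_tour hi' hj' (hfac.symm.trans (hrep.trans hfac'))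
  exact hmod (Nat.mod_eq_zero_of_dvd
    (Nat.left_modEq_add_iff.1 (hii'.trans (hij.trans hjj'.symm))))

theorem not_factorEq_encode_of_short_period (hu : RepetitionFree 3 u) (hp : 60 ≤ p)
    (hp' : p < 180) (hi : i + p + (p + 2) / 3 ≤ 240 * u.length) :
    ¬ FactorEq (encode u).testBit i (encode u).testBit (i + p) ((p + 2) / 3) := by
  intro hrep
  obtain ⟨i', -, hi', hfac⟩ :=
    exists_factorEq_tour (i := i) (l := p + (p + 2) / 3) hu (by omega) (by omega) (by omega)
  exact not_factorEq_tour_of_short_period hp hp' (by omega)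
    (FactorEq.transfer Function.injective_id 0 p hrep hfac hfac (by omega) (by omega))

theorem not_factorEq_encode (hu : RepetitionFree 3 u) (hp : 60 ≤ p) (hpl : p ≤ 3 * l)
    (hi : i + p + l ≤ 240 * u.length) :
    ¬ FactorEq (encode u).testBit i (encode u).testBit (i + p) l := by
  intro hrep
  by_cases hmod : p % 240 = 0
  · obtain ⟨q, rfl⟩ := Nat.dvd_of_mod_eq_zero hmod
    exact not_factorEq_encode_of_aligned hu (by omega) hpl hi hrep
  · rcases lt_or_ge p 180 with hp' | hp'
    · exact not_factorEq_encode_of_short_period hu hp hp' (by omega)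
        (hrep.slice 0 (by omega))
    · exact not_factorEq_encode_of_unaligned hu hp' hmod (by omega) (hrep.slice 0 (by omega))

theorem not_occursAt_encode (hu : RepetitionFree 3 u) (ha : 0 < a) (hb : 0 < b) (hac : a ≤ c)
    (hi : i + (a + 2 * b + 2 * c) ≤ 240 * u.length)
    (hj : j + (2 * a + 2 * b + c) ≤ 240 * u.length) :
    ¬ OccursAt_s18 (encode u).testBit a b c i j := by
  intro hocc
  have hperiod : ¬ (60 ≤ a + 2 * b + c ∧ a + 2 * b + c ≤ 3 * c) := fun h =>
    not_factorEq_encode hu h.1 h.2 (by omega) hocc.c_repeat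
  have hperiod' : ¬ (60 ≤ a + b ∧ a + b ≤ 3 * b) := fun h =>
    not_factorEq_encode (i := i + c) hu h.1 h.2 (by omega)
      (by simpa only [Nat.add_assoc] using hocc.b_repeat)
  have hperiod'' : ¬ (60 ≤ b + c ∧ b + c ≤ 3 * b) := fun h =>
    not_factorEq_encode (i := j + a) hu h.1 h.2 (by omega)
      (by simpa only [Nat.add_assoc] using hocc.b_repeat')
  have hP : a + 2 * b + c < 120 := by omega
  obtain ⟨i', -, hi', hfac⟩ := exists_factorEq_tour hu (by omega) (by omega) hi
  obtain ⟨j', -, hj', hfac'⟩ := exists_factorEq_tour hu (by omega) (by omega) hj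
  exact not_occursAt_tour ha hb hac hP hi' hj'
    (hocc.transfer Function.injective_id hfac hfac')

end Encoding

section BinaryWords

variable {Z i k l n : ℕ} {u v : List (Fin 8)} {w : List (Fin 2)}

/-- The word of length `n` whose letter `i` is bit `i` of `Z`. -/
def binaryWord (Z n : ℕ) : List (Fin 2) :=
  (List.range n).map fun i => finTwoEquiv.symm (Z.testBit i)

@[simp]
theorem length_binaryWord : (binaryWord Z n).length = n := by
  rw [binaryWord, List.length_map, List.length_range]

theorem getElem?_binaryWord (hi : i < n) :
    (binaryWord Z n)[i]? = some (finTwoEquiv.symm (Z.testBit i)) := by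
  rw [binaryWord, List.getElem?_map, List.getElem?_range hi, Option.map_some]

theorem some_finTwoEquiv_symm_injective :
    (fun b => some (finTwoEquiv.symm b)).Injective :=
  (Option.some_injective _).comp finTwoEquiv.symm.injective

theorem factorEq_binaryWord (h : i + l ≤ n) :
    FactorEq ((binaryWord Z n)[·]?) i ((fun b => some (finTwoEquiv.symm b)) ∘ Z.testBit) i l :=
  fun _ hx => getElem?_binaryWord (by omega)

theorem avoidsABCBA_of_forall_length_le
    (h : ∀ A B C : List (Fin 2), A ≠ [] → B ≠ [] → A.length ≤ C.length →
      A ++ B ++ C ++ B ++ A <:+: w → ¬ C ++ B ++ A ++ B ++ C <:+: w) :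
    AvoidsABCBA w := by
  rintro ⟨A, B, C, hA, hB, hC, hABCBA, hCBABC⟩
  rcases le_total A.length C.length with hle | hle
  · exact h A B C hA hB hle hABCBA hCBABC
  · exact h C B A hC hB hle hCBABC hABCBA

theorem avoidsABCBA_binaryWord_encode (hu : RepetitionFree 3 u) (hn : n ≤ 240 * u.length) :
    AvoidsABCBA (binaryWord (encode u) n) := by
  refine avoidsABCBA_of_forall_length_le fun A B C hA hB hle hABCBA hCBABC => ?_
  obtain ⟨i, j, hi, hj, hocc⟩ := exists_occursAt_of_infix hABCBA hCBABC
  rw [length_binaryWord] at hi hj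
  exact not_occursAt_encode hu (List.length_pos_iff.2 hA) (List.length_pos_iff.2 hB) hle
    (hi.trans hn) (hj.trans hn)
    (hocc.transfer some_finTwoEquiv_symm_injective (factorEq_binaryWord hi)
      (factorEq_binaryWord hj))

theorem getElem_eq_of_binaryWord_encode_eq (h : binaryWord (encode u) n = binaryWord (encode v) n)
    (hk : 240 * (k + 1) ≤ n) (hku : k < u.length) (hkv : k < v.length) : u[k] = v[k] := by
  refine eq_of_factorEq_block (i := 0) (by omega) fun x hx => ?_
  rw [← testBit_encode hku (by omega), ← testBit_encode hkv (by omega)]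
  refine some_finTwoEquiv_symm_injective ?_
  simp only [← getElem?_binaryWord (show 240 * k + (0 + x) < n by omega), h]

theorem eq_of_binaryWord_encode_eq (hu : u.length = n / 240 + 1) (hv : v.length = n / 240 + 1)
    (h : binaryWord (encode u) n = binaryWord (encode v) n)
    (hlast : u.getD (n / 240) 0 = v.getD (n / 240) 0) : u = v := by
  refine List.ext_getElem (hu.trans hv.symm) fun k hku hkv => ?_
  rcases Nat.lt_or_eq_of_le (show k ≤ n / 240 by omega) with hk | rfl
  · exact getElem_eq_of_binaryWord_encode_eq h (by omega) hku hkv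
  · rwa [List.getD_eq_getElem _ _ hku, List.getD_eq_getElem _ _ hkv] at hlast

theorem two_pow_le_ncard_avoidsABCBA (n : ℕ) :
    2 ^ (n / 240 + 1) ≤ 8 * {w : List (Fin 2) | w.length = n ∧ AvoidsABCBA w}.ncard := by
  have hfin : {w : List (Fin 2) | w.length = n ∧ AvoidsABCBA w}.Finite :=
    (List.finite_length_eq _ n).subset fun _ hw => hw.1
  calc 2 ^ (n / 240 + 1) ≤ #(repetitionFreeWords (Fin 8) 3 (n / 240 + 1)) :=
        two_pow_le_card_repetitionFreeWords (by simp) _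
    _ ≤ #((univ : Finset (Fin 8)) ×ˢ hfin.toFinset) := by
      refine card_le_card_of_injOn (fun u => (u.getD (n / 240) 0, binaryWord (encode u) n))
        (fun u hu => ?_) fun u hu v hv huv => ?_
      · obtain ⟨hlen, hfree⟩ := mem_repetitionFreeWords.1 hu
        have hav := avoidsABCBA_binaryWord_encode (n := n) hfree (by omega)
        simpa using hav
      · obtain ⟨hlast, hword⟩ := Prod.mk.inj huv
        exact eq_of_binaryWord_encode_eq (mem_repetitionFreeWords.1 hu).1
          (mem_repetitionFreeWords.1 hv).1 hword hlast
    _ = _ := by rw [card_product, card_univ, Fintype.card_fin, Set.ncard_eq_toFinset_card _ hfin]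

end BinaryWords

theorem exists_one_lt_pow_eq {x : ℝ} (hx : 1 < x) {m : ℕ} (hm : m ≠ 0) : ∃ c, 1 < c ∧ c ^ m = x :=
  ⟨x ^ (m : ℝ)⁻¹, Real.one_lt_rpow hx (by positivity), Real.rpow_inv_natCast_pow (by linarith) hm⟩

/-- The number of binary words of length `n` avoiding the formula
`ABCBA.CBABC` grows exponentially: there are a real constant `c > 1` and a
threshold `N` such that for every `n ≥ N` there are at least `c ^ n` such
words. -/
theorem stmt_18 :
    ∃ c : ℝ, 1 < c ∧ ∃ N : ℕ, ∀ n, N ≤ n →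
      c ^ n ≤ ({w : List (Fin 2) | w.length = n ∧ AvoidsABCBA w}.ncard : ℝ) := by
  obtain ⟨c, hc, hcpow⟩ := exists_one_lt_pow_eq one_lt_two (m := 480) (by norm_num)
  refine ⟨c, hc, 1440, fun n hn => ?_⟩
  obtain ⟨k, hk⟩ := Nat.exists_eq_add_of_le (show 2 ≤ n / 240 by omega)
  have hcount := two_pow_le_ncard_avoidsABCBA n
  rw [hk, show 2 + k + 1 = 3 + k by omega, pow_add, show 2 ^ 3 = 8 by rfl] at hcount
  calc c ^ n ≤ c ^ (480 * k) := pow_le_pow_right₀ hc.le (by omega)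
    _ = 2 ^ k := by rw [pow_mul, hcpow]
    _ ≤ _ := by exact_mod_cast Nat.le_of_mul_le_mul_left hcount (by norm_num)
end
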